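/- arXiv:1101.5470 — 7 statements merged into one kernel-verified Lean document; each statement's English description precedes it below -/
import Mathlib

section
/- Let A₁, A₂, A₃ be two-dimensional vector spaces over the field 𝔽₂ with two elements, and let B be a linear subspace of A₁ ⊕ A₂ ⊕ A₃ satisfying property (P): for any b₁, b₂ ∈ B, the number of indices i ∈ {1,2,3} such that the canonical projection of the span of {b₁, b₂} onto A_i is surjective is even. Assume B is maximal among subspaces satisfying (P). Then, up to a permutation of the indices {1,2,3}, one of the following holds: (1) dim(B ∩ A_i) = 1 for each i = 1,2,3 and B = (B ∩ A₁) ⊕ (B ∩ A₂) ⊕ (B ∩ A₃); (2) there exist a linear isomorphism f : A₁ → A₂ and a nonzero element a₃ ∈ A₃ such that B = {a + f(a) : a ∈ A₁} ⊕ 𝔽₂a₃; (3) there exist linear isomorphisms f² : A₁ → A₂ and f³ : A₁ → A₃ and a basis {a, b} of A₁ such that B = 𝔽₂(a + f²(a) + f³(a)) ⊕ 𝔽₂(b + f²(b)) ⊕ 𝔽₂(b + f³(b)). -/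
/-!
A plane over `𝔽₂` carries a unique nonzero alternating form `ωᵢ`, and two vectors span the plane
iff `ωᵢ` takes the value `1` on them. The number of surjective projections of `span {x, y}` is
therefore congruent mod `2` to `∑ i, ωᵢ (xᵢ, yᵢ)`, so that the maximal subspaces in question are
exactly the Lagrangians `B` of the orthogonal sum of the planes. For such a `B` the section
`B ∩ Aᵢ` is the orthogonal complement in `Aᵢ` of the projection of `B`: it is either zero, with `B`
projecting onto `Aᵢ`, or a line equal to that projection. The number of zero sections is `0`, `2`
or `3`, because if all other projections lie in `B` then so does the remaining one.

With two zero sections, `B` is a graph plus a line. With three, `B` has dimension `3`, so it meets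
the kernels of the projections to `A₁` and `A₂` in some `l` and `k`. The relation `Ω (k, l) = 0`
makes `k₀` and `l₀` proportional, and `k`, `l` together with any `w ∈ B` such that
`ω₀ (w₀, k₀) ≠ 0` form the required basis.
-/

open Module Submodule
open LinearMap (BilinForm)

section Plane

variable {K V : Type*} [Field K] [AddCommGroup V] [Module K V] {ω : BilinForm K V} {x y : V}

theorem exists_isAlt_nondegenerate_of_finrank_eq_two (hV : finrank K V = 2) :
    ∃ ω : BilinForm K V, ω.IsAlt ∧ ω.Nondegenerate := by
  have : FiniteDimensional K V := .of_finrank_eq_succ hV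
  let b := finBasisOfFinrankEq K V hV
  refine ⟨Matrix.toBilin b !![0, 1; -1, 0], fun x ↦ ?_, ?_⟩
  · simp [Matrix.toBilin_apply, Fin.sum_univ_two, mul_comm]
  · simp [BilinForm.nondegenerate_iff_det_ne_zero b, Matrix.det_fin_two]

theorem linearIndependent_pair_of_apply_ne_zero (hAlt : ω.IsAlt) (hxy : ω x y ≠ 0) :
    LinearIndependent K ![x, y] := by
  have hx : x ≠ 0 := by rintro rfl; simp at hxy
  refine (LinearIndependent.pair_iff' hx).2 fun a ha ↦ hxy ?_
  rw [← ha, map_smul, hAlt.self_eq_zero, smul_zero]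

theorem linearIndependent_pair_iff_apply_ne_zero (hV : finrank K V = 2) (hAlt : ω.IsAlt)
    (hω : ω.Nondegenerate) : LinearIndependent K ![x, y] ↔ ω x y ≠ 0 := by
  refine ⟨fun h hxy ↦ ?_, linearIndependent_pair_of_apply_ne_zero hAlt⟩
  have hdet := (BilinForm.nondegenerate_iff_det_ne_zero
    (basisOfLinearIndependentOfCardEqFinrank h (by simp [hV]))).1 hω
  simp [Matrix.det_fin_two, hAlt.self_eq_zero, hxy] at hdet

theorem span_pair_eq_top_iff_apply_ne_zero (hV : finrank K V = 2) (hAlt : ω.IsAlt)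
    (hω : ω.Nondegenerate) : span K {x, y} = ⊤ ↔ ω x y ≠ 0 := by
  rw [← linearIndependent_pair_iff_apply_ne_zero hV hAlt hω, ← Matrix.range_cons_cons_empty x y ![]]
  exact ⟨fun h ↦ linearIndependent_of_top_le_span_of_card_eq_finrank h.ge (by simp [hV]),
    fun h ↦ h.span_eq_top_of_card_eq_finrank (by simp [hV])⟩

theorem exists_basis_eq_pair (hV : finrank K V = 2) (h : LinearIndependent K ![x, y]) :
    ∃ b : Basis (Fin 2) K V, ⇑b = ![x, y] :=
  ⟨basisOfLinearIndependentOfCardEqFinrank h (by simp [hV]), by simp⟩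

theorem exists_linearEquiv_apply_eq_pair {W : Type*} [AddCommGroup W] [Module K W]
    (hV : finrank K V = 2) (hW : finrank K W = 2) {x' y' : W}
    (h : LinearIndependent K ![x, y]) (h' : LinearIndependent K ![x', y']) :
    ∃ f : V ≃ₗ[K] W, f x = x' ∧ f y = y' := by
  obtain ⟨b, hb⟩ := exists_basis_eq_pair hV h
  obtain ⟨b', hb'⟩ := exists_basis_eq_pair hW h'
  have hf (i : Fin 2) : b.equiv b' (.refl _) (![x, y] i) = ![x', y'] i := by
    rw [← hb, ← hb', Basis.equiv_apply, Equiv.refl_apply]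
  exact ⟨b.equiv b' (.refl _), hf 0, hf 1⟩

theorem span_range_eq_of_card_eq_finrank {ι : Type*} [Fintype ι] {v : ι → V} {B : Submodule K V}
    [FiniteDimensional K B] (hv : LinearIndependent K v) (hvB : ∀ i, v i ∈ B)
    (hcard : Fintype.card ι = finrank K B) : span K (Set.range v) = B :=
  eq_of_le_of_finrank_le (span_le.2 (Set.range_subset_iff.2 hvB))
    (by rw [finrank_span_eq_card hv, hcard])

end Plane

section PiForm

variable {ι R : Type*} {A : ι → Type*} [Fintype ι] [CommRing R] [∀ i, AddCommGroup (A i)]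
  [∀ i, Module R (A i)] {ω : ∀ i, BilinForm R (A i)}

/-- The orthogonal direct sum of a finite family of bilinear forms. -/
def piForm (ω : ∀ i, BilinForm R (A i)) : BilinForm R (∀ i, A i) :=
  ∑ i, (ω i).comp (LinearMap.proj i) (LinearMap.proj i)

theorem piForm_apply (x y : ∀ i, A i) : piForm ω x y = ∑ i, ω i (x i) (y i) := by
  simp [piForm]

theorem piForm_single_left [DecidableEq ι] (i : ι) (a : A i) (x : ∀ i, A i) :
    piForm ω (Pi.single i a) x = ω i a (x i) := by
  rw [piForm_apply, Finset.sum_eq_single i (fun j _ hj ↦ by simp [hj]) (by simp),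
    Pi.single_eq_same]

theorem piForm_single_right [DecidableEq ι] (x : ∀ i, A i) (i : ι) (a : A i) :
    piForm ω x (Pi.single i a) = ω i (x i) a := by
  rw [piForm_apply, Finset.sum_eq_single i (fun j _ hj ↦ by simp [hj]) (by simp),
    Pi.single_eq_same]

theorem isAlt_piForm (hAlt : ∀ i, (ω i).IsAlt) : (piForm ω).IsAlt := fun x ↦ by
  simp [piForm_apply, (hAlt _).self_eq_zero]

theorem nondegenerate_piForm (hω : ∀ i, (ω i).Nondegenerate) : (piForm ω).Nondegenerate := by
  classical
  constructor
  · exact fun x hx ↦ funext fun i ↦ (hω i).1 _ fun a ↦ by rw [← piForm_single_right, hx]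
  · exact fun x hx ↦ funext fun i ↦ (hω i).2 _ fun a ↦ by rw [← piForm_single_left, hx]

end PiForm

theorem even_card_map_proj_span_pair_eq_top_iff {ι : Type*} [Fintype ι] {A : ι → Type*}
    [∀ i, AddCommGroup (A i)] [∀ i, Module (ZMod 2) (A i)] {ω : ∀ i, BilinForm (ZMod 2) (A i)}
    (hA : ∀ i, finrank (ZMod 2) (A i) = 2) (hAlt : ∀ i, (ω i).IsAlt)
    (hω : ∀ i, (ω i).Nondegenerate) (x y : ∀ i, A i) :
    Even (Nat.card {i // (span (ZMod 2) {x, y}).map (LinearMap.proj i) = ⊤}) ↔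
      piForm ω x y = 0 := by
  classical
  have hsurj (i : ι) : (span (ZMod 2) {x, y}).map (LinearMap.proj (φ := A) i) = ⊤ ↔
      ω i (x i) (y i) ≠ 0 := by
    rw [map_span, Set.image_pair]
    exact span_pair_eq_top_iff_apply_ne_zero (hA i) (hAlt i) (hω i)
  have hval (a : ZMod 2) : (if a ≠ 0 then 1 else 0) = a := by decide +revert
  simp_rw [hsurj]
  rw [← ZMod.natCast_eq_zero_iff_even, Nat.card_eq_fintype_card, Fintype.card_subtype,
    Finset.natCast_card_filter, piForm_apply]
  simp_rw [hval]

section Single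

variable {ι R : Type*} {A : ι → Type*} [Ring R] [∀ i, AddCommGroup (A i)] [∀ i, Module R (A i)]
  {B : Submodule R (∀ i, A i)}

theorem linearIndependent_triple_of_pairs {w k l : ∀ i, A i} {i j : ι}
    (hk : k j = 0) (hl : l i = 0)
    (hwk : LinearIndependent R ![w i, k i]) (hwl : LinearIndependent R ![w j, l j]) :
    LinearIndependent R ![w, k, l] := by
  rw [LinearIndependent.pair_iff] at hwk hwl
  refine Fintype.linearIndependent_iff.2 fun g hg ↦ ?_
  simp only [Fin.sum_univ_three, Matrix.cons_val] at hg
  obtain ⟨h₀, h₁⟩ := hwk (g 0) (g 1) (by simpa [hl] using congrFun hg i)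
  obtain ⟨-, h₂⟩ := hwl (g 0) (g 2) (by simpa [hk] using congrFun hg j)
  simp [Fin.forall_fin_succ, h₀, h₁, h₂]

variable [DecidableEq ι]

theorem comap_single_le_map_proj (B : Submodule R (∀ i, A i)) (i : ι) :
    B.comap (LinearMap.single R A i) ≤ B.map (LinearMap.proj i) :=
  fun a ha ↦ ⟨Pi.single i a, ha, Pi.single_eq_same i a⟩

theorem single_apply_mem_of_forall_ne [Finite ι] {x : ∀ i, A i} {i : ι} (hx : x ∈ B)
    (h : ∀ j ≠ i, Pi.single j (x j) ∈ B) : Pi.single i (x i) ∈ B := by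
  cases nonempty_fintype ι
  rw [← LinearMap.sum_single_apply A x, ← Finset.add_sum_erase _ _ (Finset.mem_univ i)] at hx
  exact (B.add_mem_iff_left <| B.sum_mem fun j hj ↦ h j (Finset.ne_of_mem_erase hj)).1 hx

theorem eq_iSup_inf_map_single [Finite ι]
    (h : ∀ i, B.map (LinearMap.proj i) ≤ B.comap (LinearMap.single R A i)) :
    B = ⨆ i, B ⊓ (⊤ : Submodule R (A i)).map (LinearMap.single R A i) := by
  refine le_antisymm (fun x hx ↦ ?_) (iSup_le fun i ↦ inf_le_left)
  cases nonempty_fintype ι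
  rw [← LinearMap.sum_single_apply A x]
  exact sum_mem fun i _ ↦ mem_iSup_of_mem i ⟨h i ⟨x, hx, rfl⟩, x i, trivial, rfl⟩

theorem finrank_inf_map_single_top (B : Submodule R (∀ i, A i)) (i : ι) :
    finrank R ↥(B ⊓ (⊤ : Submodule R (A i)).map (LinearMap.single R A i)) =
      finrank R (B.comap (LinearMap.single R A i)) := by
  rw [Submodule.map_top, inf_comm, ← map_comap_eq]
  exact (equivMapOfInjective _ (Pi.single_injective i) _).finrank_eq.symm

end Single

theorem forall_fin_three_iff_perm (σ : Equiv.Perm (Fin 3)) {p : Fin 3 → Prop} :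
    (∀ i, p i) ↔ p (σ 0) ∧ p (σ 1) ∧ p (σ 2) := by
  rw [σ.surjective.forall, Fin.forall_fin_succ, Fin.forall_fin_two]
  rfl

theorem forall_or_exists_perm_or_forall_not {p : Fin 3 → Prop}
    (h : ∀ i, (∀ j ≠ i, p j) → p i) :
    (∀ i, p i) ∨ (∃ σ : Equiv.Perm (Fin 3), ¬ p (σ 0) ∧ ¬ p (σ 1) ∧ p (σ 2)) ∨ ∀ i, ¬ p i := by
  by_cases hp : ∃ i, p i
  · obtain ⟨i, hi⟩ := hp
    obtain ⟨σ, rfl⟩ : ∃ σ : Equiv.Perm (Fin 3), σ 2 = i := ⟨Equiv.swap 2 i, by simp⟩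
    simp only [forall_fin_three_iff_perm σ, ne_eq, EmbeddingLike.apply_eq_iff_eq] at h ⊢
    grind
  · grind

/-- A submodule is Lagrangian for a bilinear form `Ω` if it is its own `Ω`-orthogonal complement.
When `Ω` is alternating, every maximal isotropic submodule is Lagrangian. -/
def IsLagrangian {R M : Type*} [CommRing R] [AddCommGroup M] [Module R M] (Ω : BilinForm R M)
    (B : Submodule R M) : Prop :=
  Ω.orthogonal B = B

namespace IsLagrangian

section Basic

variable {R M : Type*} [CommRing R] [AddCommGroup M] [Module R M]
  {Ω : BilinForm R M} {B : Submodule R M}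

theorem of_maximal (hΩ : Ω.IsAlt) (hB : Maximal (fun C ↦ C ≤ Ω.orthogonal C) B) :
    IsLagrangian Ω B := by
  refine le_antisymm (fun v hv ↦ ?_) hB.prop
  suffices h : B ⊔ span R {v} ≤ Ω.orthogonal (B ⊔ span R {v}) from
    hB.le_of_ge h le_sup_left (mem_sup_right (mem_span_singleton_self v))
  have hv' {b : M} (hb : b ∈ B) : Ω v b = 0 := hΩ.isRefl _ _ (hv b hb)
  intro x hx y hy
  obtain ⟨b, hb, -, ⟨c, rfl⟩, rfl⟩ := by simpa only [mem_sup, mem_span_singleton] using hx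
  obtain ⟨b', hb', -, ⟨c', rfl⟩, rfl⟩ := by simpa only [mem_sup, mem_span_singleton] using hy
  simp [hB.prop hb b' hb', hv b' hb', hv' hb, hΩ.self_eq_zero]

theorem apply_eq_zero (hB : IsLagrangian Ω B) {x y : M} (hx : x ∈ B) (hy : y ∈ B) : Ω x y = 0 :=
  hB.ge hy x hx

end Basic

theorem two_mul_finrank {K V : Type*} [Field K] [AddCommGroup V] [Module K V]
    [FiniteDimensional K V] {Ω : BilinForm K V} {B : Submodule K V} (hB : IsLagrangian Ω B)
    (hΩ : Ω.Nondegenerate) : 2 * finrank K B = finrank K V := by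
  have h := BilinForm.finrank_orthogonal hΩ B
  rw [hB] at h
  have := B.finrank_le
  lia

section Pi

variable {ι K : Type*} {A : ι → Type*} [Fintype ι] [Field K] [∀ i, AddCommGroup (A i)]
  [∀ i, Module K (A i)] {ω : ∀ i, BilinForm K (A i)} {B : Submodule K (∀ i, A i)} {i : ι}
  (hB : IsLagrangian (piForm ω) B) [DecidableEq ι]
include hB

theorem comap_single_eq_orthogonal_map_proj (i : ι) :
    B.comap (LinearMap.single K A i) = (ω i).orthogonal (B.map (LinearMap.proj i)) := by
  ext a
  have hmem : Pi.single i a ∈ B ↔ ∀ b ∈ B, piForm ω b (Pi.single i a) = 0 :=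
    (SetLike.ext_iff.1 hB _).symm
  simpa [piForm_single_right] using hmem

variable [FiniteDimensional K (A i)] (hω : (ω i).Nondegenerate)
include hω

theorem finrank_comap_single_add_finrank_map_proj :
    finrank K (B.comap (LinearMap.single K A i)) + finrank K (B.map (LinearMap.proj i)) =
      finrank K (A i) := by
  rw [hB.comap_single_eq_orthogonal_map_proj, BilinForm.finrank_orthogonal hω]
  exact Nat.sub_add_cancel (finrank_le _)

theorem map_proj_eq_top (h : B.comap (LinearMap.single K A i) = ⊥) :
    B.map (LinearMap.proj i) = ⊤ := by
  apply eq_top_of_finrank_eq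
  rw [← hB.finrank_comap_single_add_finrank_map_proj hω, h, finrank_bot, zero_add]

theorem comap_single_ne_bot [Nontrivial (A i)]
    (h : ∀ j ≠ i, B.map (LinearMap.proj j) ≤ B.comap (LinearMap.single K A j)) :
    B.comap (LinearMap.single K A i) ≠ ⊥ := by
  intro hi
  have hle : B.map (LinearMap.proj i) ≤ B.comap (LinearMap.single K A i) := by
    rintro - ⟨x, hx, rfl⟩
    exact single_apply_mem_of_forall_ne hx fun j hj ↦ h j hj ⟨x, hx, rfl⟩
  rw [hB.map_proj_eq_top hω hi, hi, top_le_iff] at hle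
  exact bot_ne_top hle

variable (hA : finrank K (A i) = 2) (hi : B.comap (LinearMap.single K A i) ≠ ⊥)
include hA hi

theorem finrank_comap_single_eq_one :
    finrank K (B.comap (LinearMap.single K A i)) = 1 := by
  have hsum := hB.finrank_comap_single_add_finrank_map_proj hω
  have hle := finrank_mono (comap_single_le_map_proj B i)
  have hpos := one_le_finrank_iff.2 hi
  lia

theorem map_proj_le_comap_single :
    B.map (LinearMap.proj i) ≤ B.comap (LinearMap.single K A i) := by
  have hsum := hB.finrank_comap_single_add_finrank_map_proj hω
  have hone := hB.finrank_comap_single_eq_one hω hA hi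
  exact (eq_of_le_of_finrank_le (comap_single_le_map_proj B i) (by lia)).ge

end Pi

section Three

variable {K : Type*} [Field K] {A : Fin 3 → Type*} [∀ i, AddCommGroup (A i)]
  [∀ i, Module K (A i)] [∀ i, FiniteDimensional K (A i)] {ω : ∀ i, BilinForm K (A i)}
  {B : Submodule K (∀ i, A i)} (hB : IsLagrangian (piForm ω) B) (hω : ∀ i, (ω i).Nondegenerate)
  (hA : ∀ i, finrank K (A i) = 2)
include hB hω hA

theorem comap_single_trichotomy :
    (∀ i, B.comap (LinearMap.single K A i) ≠ ⊥) ∨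
    (∃ σ : Equiv.Perm (Fin 3), B.comap (LinearMap.single K A (σ 0)) = ⊥ ∧
      B.comap (LinearMap.single K A (σ 1)) = ⊥ ∧ B.comap (LinearMap.single K A (σ 2)) ≠ ⊥) ∨
    ∀ i, B.comap (LinearMap.single K A i) = ⊥ := by
  have h := forall_or_exists_perm_or_forall_not
    (p := fun i ↦ B.comap (LinearMap.single K A i) ≠ ⊥) fun i hi ↦
      have : Nontrivial (A i) := nontrivial_of_finrank_pos (R := K) (by simp [hA])
      hB.comap_single_ne_bot (hω i) fun j hj ↦ hB.map_proj_le_comap_single (hω j) (hA j) (hi j hj)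
  simpa only [not_not] using h

theorem exists_linearEquiv_mem_iff (σ : Equiv.Perm (Fin 3))
    (h₀ : B.comap (LinearMap.single K A (σ 0)) = ⊥)
    (h₁ : B.comap (LinearMap.single K A (σ 1)) = ⊥)
    (h₂ : B.comap (LinearMap.single K A (σ 2)) ≠ ⊥) :
    ∃ f : A (σ 0) ≃ₗ[K] A (σ 1), ∃ a : A (σ 2), a ≠ 0 ∧
      ∀ x : ∀ i, A i, x ∈ B ↔ x (σ 1) = f (x (σ 0)) ∧ ∃ c : K, x (σ 2) = c • a := by
  have hsplit {x} (hx : x ∈ B) : Pi.single (σ 2) (x (σ 2)) ∈ B :=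
    hB.map_proj_le_comap_single (hω _) (hA _) h₂ ⟨x, hx, rfl⟩
  have hzero {x} (hx : x ∈ B) : x (σ 0) = 0 ↔ x (σ 1) = 0 := by
    refine ⟨fun h ↦ h₁.le (single_apply_mem_of_forall_ne hx ?_),
      fun h ↦ h₀.le (single_apply_mem_of_forall_ne hx ?_)⟩ <;>
    simp [forall_fin_three_iff_perm σ, h, hsplit hx]
  have hsurj {i} (hi : B.comap (LinearMap.single K A i) = ⊥) (a : A i) : ∃ x : B, x.1 i = a := by
    simpa using (hB.map_proj_eq_top (hω i) hi).ge (mem_top (x := a))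
  obtain ⟨f, hf⟩ := LinearMap.exists_linearEquiv_eq_graph
    (f := (LinearMap.prod (.proj (σ 0)) (.proj (σ 1))).comp B.subtype) (hsurj h₀) (hsurj h₁)
    fun x y ↦ by simpa [sub_eq_zero] using hzero (x - y).2
  have hgraph (x : ∀ i, A i) :
      (∃ b ∈ B, b (σ 0) = x (σ 0) ∧ b (σ 1) = x (σ 1)) ↔ x (σ 1) = f (x (σ 0)) := by
    simpa [and_left_comm] using SetLike.ext_iff.1 hf (x (σ 0), x (σ 1))
  obtain ⟨⟨a, haB⟩, ha, hspan⟩ :=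
    finrank_eq_one_iff'.1 (hB.finrank_comap_single_eq_one (hω _) (hA _) h₂)
  refine ⟨f, a, by simpa using ha, fun x ↦ ⟨fun hx ↦ ⟨(hgraph x).1 ⟨x, hx, rfl, rfl⟩, ?_⟩, ?_⟩⟩
  · obtain ⟨c, hc⟩ := hspan ⟨x (σ 2), hsplit hx⟩
    exact ⟨c, congrArg Subtype.val hc.symm⟩
  · rintro ⟨hx, c, hc⟩
    obtain ⟨b, hb, hb₀, hb₁⟩ := (hgraph x).2 hx
    have hxb : x = b + (Pi.single (σ 2) (c • a) - Pi.single (σ 2) (b (σ 2))) := by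
      rw [funext_iff, forall_fin_three_iff_perm σ]
      simp [hb₀, hb₁, hc]
    rw [hxb]
    have haB' : Pi.single (σ 2) (c • a) ∈ B :=
      (B.comap (LinearMap.single K A (σ 2))).smul_mem c haB
    exact B.add_mem hb (B.sub_mem haB' (hsplit hb))

theorem finrank_eq_three : finrank K B = 3 := by
  have h := hB.two_mul_finrank (nondegenerate_piForm hω)
  simp only [finrank_pi_fintype, hA, Fin.sum_univ_three] at h
  lia

theorem exists_mem_apply_eq_zero_forall_ne (h : ∀ i, B.comap (LinearMap.single K A i) = ⊥)
    (i : Fin 3) :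
    ∃ k ∈ B, k i = 0 ∧ ∀ j ≠ i, k j ≠ 0 := by
  have hker : ((LinearMap.proj i).comp B.subtype).ker ≠ ⊥ :=
    LinearMap.ker_ne_bot_of_finrank_lt (by simp [hA, hB.finrank_eq_three hω hA])
  obtain ⟨⟨k, hk⟩, hki, hk₀⟩ := exists_mem_ne_zero_of_ne_bot hker
  replace hki : k i = 0 := hki
  refine ⟨k, hk, hki, fun j hj hkj ↦ hk₀ ?_⟩
  have hzero (l : Fin 3) : k l = 0 := by
    by_cases hl : k l = 0
    · exact hl
    refine (h l).le (single_apply_mem_of_forall_ne hk fun m hm ↦ ?_)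
    obtain rfl | rfl : m = i ∨ m = j := by grind
    · simp [hki]
    · simp [hkj]
  exact Subtype.ext (funext hzero)

theorem exists_mem_mem_apply_zero_eq (hAlt : ∀ i, (ω i).IsAlt)
    (h : ∀ i, B.comap (LinearMap.single K A i) = ⊥) :
    ∃ k ∈ B, ∃ l ∈ B, k 2 = 0 ∧ l 1 = 0 ∧ l 0 = k 0 ∧ k 0 ≠ 0 := by
  obtain ⟨k, hk, hk₂, hk_ne⟩ := hB.exists_mem_apply_eq_zero_forall_ne hω hA h 2
  obtain ⟨l, hl, hl₁, hl_ne⟩ := hB.exists_mem_apply_eq_zero_forall_ne hω hA h 1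
  have hlk : ω 0 (l 0) (k 0) = 0 := by
    simpa [piForm_apply, Fin.sum_univ_three, hk₂, hl₁] using hB.apply_eq_zero hl hk
  obtain ⟨c, hc⟩ : ∃ c : K, c • l 0 = k 0 := by
    by_contra! hne
    exact (linearIndependent_pair_iff_apply_ne_zero (hA 0) (hAlt 0) (hω 0)).1
      ((LinearIndependent.pair_iff' (hl_ne 0 (by decide))).2 hne) hlk
  exact ⟨k, hk, c • l, B.smul_mem c hl, hk₂, by simp [hl₁], hc, hk_ne 0 (by decide)⟩

theorem exists_span_triple_eq (hAlt : ∀ i, (ω i).IsAlt)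
    (h : ∀ i, B.comap (LinearMap.single K A i) = ⊥) :
    ∃ w k l : ∀ i, A i, k 2 = 0 ∧ l 1 = 0 ∧ l 0 = k 0 ∧ LinearIndependent K ![w 0, k 0] ∧
      LinearIndependent K ![w 1, k 1] ∧ LinearIndependent K ![w 2, l 2] ∧
      span K {w, k, l} = B := by
  obtain ⟨k, hk, l, hl, hk₂, hl₁, hlk, hk₀⟩ := hB.exists_mem_mem_apply_zero_eq hω hA hAlt h
  obtain ⟨v, hv⟩ : ∃ v, ω 0 v (k 0) ≠ 0 := by
    by_contra! hv
    exact hk₀ ((hω 0).2 _ hv)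
  obtain ⟨w, hw, rfl⟩ := mem_map.1 <| (hB.map_proj_eq_top (hω 0) (h 0)).ge (mem_top (x := v))
  rw [LinearMap.proj_apply] at hv
  have hwk : ω 0 (w 0) (k 0) + ω 1 (w 1) (k 1) = 0 := by
    simpa [piForm_apply, Fin.sum_univ_three, hk₂] using hB.apply_eq_zero hw hk
  have hwl : ω 0 (w 0) (k 0) + ω 2 (w 2) (l 2) = 0 := by
    simpa [piForm_apply, Fin.sum_univ_three, hl₁, hlk] using hB.apply_eq_zero hw hl
  have hv₁ : ω 1 (w 1) (k 1) ≠ 0 := by grind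
  have hv₂ : ω 2 (w 2) (l 2) ≠ 0 := by grind
  have hli₁ := linearIndependent_pair_of_apply_ne_zero (hAlt 1) hv₁
  have hli₂ := linearIndependent_pair_of_apply_ne_zero (hAlt 2) hv₂
  have hli := linearIndependent_triple_of_pairs hk₂ hl₁ hli₁ hli₂
  refine ⟨w, k, l, hk₂, hl₁, hlk, linearIndependent_pair_of_apply_ne_zero (hAlt 0) hv,
    hli₁, hli₂, ?_⟩
  have hrange : Set.range ![w, k, l] = {w, k, l} := by
    rw [Matrix.range_cons, Matrix.range_cons_cons_empty, Set.singleton_union]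
  rw [← hrange]
  refine span_range_eq_of_card_eq_finrank hli ?_ ?_
  · simp [Fin.forall_fin_succ, hw, hk, hl]
  · simp [hB.finrank_eq_three hω hA]

theorem exists_basis_mem_iff (hAlt : ∀ i, (ω i).IsAlt)
    (h : ∀ i, B.comap (LinearMap.single K A i) = ⊥) :
    ∃ f₂ : A 0 ≃ₗ[K] A 1, ∃ f₃ : A 0 ≃ₗ[K] A 2, ∃ b : Basis (Fin 2) K (A 0),
      ∀ x : ∀ i, A i, x ∈ B ↔ ∃ c₁ c₂ c₃ : K,
        x 0 = c₁ • b 0 + (c₂ + c₃) • b 1 ∧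
        x 1 = c₁ • f₂ (b 0) + c₂ • f₂ (b 1) ∧
        x 2 = c₁ • f₃ (b 0) + c₃ • f₃ (b 1) := by
  obtain ⟨w, k, l, hk₂, hl₁, hlk, hli₀, hli₁, hli₂, rfl⟩ := hB.exists_span_triple_eq hω hA hAlt h
  obtain ⟨b, hb⟩ := exists_basis_eq_pair (hA 0) hli₀
  obtain ⟨f₂, hf₂w, hf₂k⟩ := exists_linearEquiv_apply_eq_pair (hA 0) (hA 1) hli₀ hli₁
  obtain ⟨f₃, hf₃w, hf₃k⟩ := exists_linearEquiv_apply_eq_pair (hA 0) (hA 2) hli₀ hli₂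
  refine ⟨f₂, f₃, b, fun x ↦ ?_⟩
  rw [mem_span_triple]
  refine exists₃_congr fun c₁ c₂ c₃ ↦ ?_
  rw [eq_comm, funext_iff]
  simp [Fin.forall_fin_succ, hb, hk₂, hl₁, hlk, hf₂w, hf₂k, hf₃w, hf₃k, add_smul, add_assoc]

end Three
end IsLagrangian

/-- classification, up to permutation of the indices, of the maximal
subspaces `B` of `A₁ ⊕ A₂ ⊕ A₃` (each `Aᵢ` two-dimensional over `𝔽₂`) with the
property that for any `b₁, b₂ ∈ B` the number of indices `i` such that the
projection of the span of `{b₁, b₂}` onto `Aᵢ` is surjective is even. -/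
theorem stmt_0 {A : Fin 3 → Type*} [∀ i, AddCommGroup (A i)] [∀ i, Module (ZMod 2) (A i)]
    (hdim : ∀ i, Module.finrank (ZMod 2) (A i) = 2)
    (P : Submodule (ZMod 2) (∀ i, A i) → Prop)
    (hP : ∀ C : Submodule (ZMod 2) (∀ i, A i), P C ↔
      ∀ b₁ ∈ C, ∀ b₂ ∈ C, Even (Nat.card {i : Fin 3 //
        Submodule.map (LinearMap.proj i) (Submodule.span (ZMod 2) {b₁, b₂}) = ⊤}))
    (B : Submodule (ZMod 2) (∀ i, A i)) (hB : P B)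
    (hmax : ∀ C, P C → B ≤ C → C = B) :
    ((∀ i, Module.finrank (ZMod 2)
        ↥(B ⊓ Submodule.map (LinearMap.single (ZMod 2) A i) ⊤) = 1) ∧
      B = (B ⊓ Submodule.map (LinearMap.single (ZMod 2) A 0) ⊤)
        ⊔ (B ⊓ Submodule.map (LinearMap.single (ZMod 2) A 1) ⊤)
        ⊔ (B ⊓ Submodule.map (LinearMap.single (ZMod 2) A 2) ⊤)) ∨
    (∃ σ : Equiv.Perm (Fin 3),
      (∃ f : A (σ 0) ≃ₗ[ZMod 2] A (σ 1), ∃ a₃ : A (σ 2), a₃ ≠ 0 ∧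
        ∀ x : ∀ i, A i, x ∈ B ↔
          (x (σ 1) = f (x (σ 0)) ∧ ∃ c : ZMod 2, x (σ 2) = c • a₃)) ∨
      (∃ f₂ : A (σ 0) ≃ₗ[ZMod 2] A (σ 1), ∃ f₃ : A (σ 0) ≃ₗ[ZMod 2] A (σ 2),
        ∃ bas : Module.Basis (Fin 2) (ZMod 2) (A (σ 0)),
        ∀ x : ∀ i, A i, x ∈ B ↔ ∃ c₁ c₂ c₃ : ZMod 2,
          x (σ 0) = c₁ • bas 0 + (c₂ + c₃) • bas 1 ∧
          x (σ 1) = c₁ • f₂ (bas 0) + c₂ • f₂ (bas 1) ∧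
          x (σ 2) = c₁ • f₃ (bas 0) + c₃ • f₃ (bas 1))) := by
  have (i : Fin 3) : FiniteDimensional (ZMod 2) (A i) := .of_finrank_eq_succ (hdim i)
  choose ω hAlt hω using fun i ↦ exists_isAlt_nondegenerate_of_finrank_eq_two (hdim i)
  have hP_iff (C : Submodule (ZMod 2) (∀ i, A i)) : P C ↔ C ≤ (piForm ω).orthogonal C := by
    simp only [hP, even_card_map_proj_span_pair_eq_top_iff hdim hAlt hω]
    exact forall₂_comm
  have hL : IsLagrangian (piForm ω) B := .of_maximal (isAlt_piForm hAlt)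
    ⟨(hP_iff B).1 hB, fun C hC hle ↦ (hmax C ((hP_iff C).2 hC) hle).le⟩
  obtain h | ⟨σ, h₀, h₁, h₂⟩ | h := hL.comap_single_trichotomy hω hdim
  · refine Or.inl ⟨fun i ↦ ?_, ?_⟩
    · rw [finrank_inf_map_single_top]
      exact hL.finrank_comap_single_eq_one (hω i) (hdim i) (h i)
    · rw [← iSup_fin_three (f := fun i ↦ B ⊓ map (LinearMap.single (ZMod 2) A i) ⊤)]
      exact eq_iSup_inf_map_single fun i ↦ hL.map_proj_le_comap_single (hω i) (hdim i) (h i)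
  · exact Or.inr ⟨σ, Or.inl (hL.exists_linearEquiv_mem_iff hω hdim σ h₀ h₁ h₂)⟩
  · exact Or.inr ⟨1, Or.inr (hL.exists_basis_mem_iff hω hdim hAlt h)⟩
end

section
/- Let A₁, A₂ be two-dimensional vector spaces over the field 𝔽₂ with two elements, and let B be a linear subspace of A₁ ⊕ A₂ such that for any b₁, b₂ ∈ B, the number of indices i ∈ {1,2} such that the canonical projection of the span of {b₁, b₂} onto A_i is surjective is even. Then one of the following holds: (1) there exist nonzero elements a₁ ∈ A₁ and a₂ ∈ A₂ such that B is contained in 𝔽₂a₁ ⊕ 𝔽₂a₂; (2) there exists a linear isomorphism f : A₁ → A₂ such that B = {a + f(a) : a ∈ A₁}. -/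
/-!
Over any division ring, let `p : M → V` and `q : M → W` be linear maps to spaces of the same
dimension `n` such that an `n`-tuple in `M` has spanning image under `p` iff it does under `q`.
Lifting a basis shows that `p` is surjective iff `q` is. If both are surjective and `q x ≠ 0`,
lift a basis of `W` through `q x` to a tuple containing `x`; its image under `p` spans, hence is a
basis, so `p x ≠ 0`. By symmetry `p` and `q` have the same kernel, and the image of `M` in `V × W`
is the graph of an isomorphism. If neither is surjective and `n = 2`, both images lie on lines.
-/

open Function Module Submodule

section DivisionRing

variable {K V W M : Type*} [DivisionRing K] [AddCommGroup V] [Module K V] [AddCommGroup W]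
  [Module K W] [AddCommGroup M] [Module K M] {n : ℕ}

theorem exists_basis_apply_eq [FiniteDimensional K V] (hV : finrank K V = n) {v : V} (hv : v ≠ 0) :
    ∃ (b : Basis (Fin n) K V) (i : Fin n), b i = v := by
  have hs : LinearIndepOn K id {v} := .singleton hv
  let b := Basis.extend hs
  have := FiniteDimensional.fintypeBasisIndex b
  let e := Fintype.equivFinOfCardEq ((finrank_eq_card_basis b).symm.trans hV)
  let i : hs.extend (Set.subset_univ _) := ⟨v, Basis.subset_extend hs rfl⟩
  exact ⟨b.reindex e, e i, by simp [b, i]⟩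

theorem exists_ne_zero_forall_mem_eq_smul (hV : finrank K V = 2) {H : Submodule K V} (hH : H ≠ ⊤) :
    ∃ v ≠ 0, ∀ x ∈ H, ∃ c : K, x = c • v := by
  have : FiniteDimensional K V := .of_finrank_eq_succ hV
  obtain ⟨f, hf, hle⟩ := exists_le_ker_of_lt_top H hH.lt_top
  have hker : finrank K f.ker = 1 :=
    Nat.add_right_cancel ((Dual.finrank_ker_add_one_of_ne_zero hf).trans hV)
  obtain ⟨v, hv, hspan⟩ := finrank_eq_one_iff'.1 hker
  refine ⟨v, by simpa using hv, fun x hx => ?_⟩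
  obtain ⟨c, hc⟩ := hspan ⟨x, hle hx⟩
  exact ⟨c, congrArg Subtype.val hc.symm⟩

variable {p : M →ₗ[K] V} {q : M →ₗ[K] W}

theorem surjective_of_span_range_comp_eq_top [FiniteDimensional K V] (hV : finrank K V = n)
    (h : ∀ b : Fin n → M, span K (Set.range (p ∘ b)) = ⊤ → span K (Set.range (q ∘ b)) = ⊤)
    (hp : Surjective p) : Surjective q := by
  let v := finBasisOfFinrankEq K V hV
  have hb : p ∘ (surjInv hp ∘ v) = v := funext fun i => surjInv_eq hp (v i)
  have hspan := h (surjInv hp ∘ v) (by rw [hb, v.span_eq])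
  rw [← LinearMap.range_eq_top, eq_top_iff, ← hspan, span_le]
  rintro _ ⟨i, rfl⟩
  exact LinearMap.mem_range_self q _

theorem ker_le_ker_of_span_range_comp_eq_top [FiniteDimensional K W]
    (hV : finrank K V = n) (hW : finrank K W = n)
    (h : ∀ b : Fin n → M, span K (Set.range (q ∘ b)) = ⊤ → span K (Set.range (p ∘ b)) = ⊤)
    (hq : Surjective q) : p.ker ≤ q.ker := by
  classical
  intro x hpx
  by_contra hqx
  obtain ⟨w, i, hwi⟩ := exists_basis_apply_eq hW hqx
  let b := update (surjInv hq ∘ w) i x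
  have hqb : q ∘ b = w := by
    rw [comp_update, ← comp_assoc, (rightInverse_surjInv hq).comp_eq_id, id_comp, ← hwi,
      update_eq_self]
  have hspan : span K (Set.range (p ∘ b)) = ⊤ := h b (by rw [hqb, w.span_eq])
  have hli : LinearIndependent K (p ∘ b) :=
    linearIndependent_of_top_le_span_of_card_eq_finrank hspan.ge (by simp [hV])
  exact hli.ne_zero i (by simpa [b] using hpx)

theorem not_surjective_and_or_exists_range_prod_eq_graph [FiniteDimensional K V]
    [FiniteDimensional K W] (hV : finrank K V = n) (hW : finrank K W = n)
    (h : ∀ b : Fin n → M, span K (Set.range (p ∘ b)) = ⊤ ↔ span K (Set.range (q ∘ b)) = ⊤) :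
    (¬ Surjective p ∧ ¬ Surjective q) ∨
      ∃ e : V ≃ₗ[K] W, (p.prod q).range = e.toLinearMap.graph := by
  have hpq : Surjective p ↔ Surjective q :=
    ⟨surjective_of_span_range_comp_eq_top hV fun b => (h b).1,
      surjective_of_span_range_comp_eq_top hW fun b => (h b).2⟩
  by_cases hp : Surjective p
  · have hq := hpq.1 hp
    have hker : p.ker = q.ker :=
      le_antisymm (ker_le_ker_of_span_range_comp_eq_top hV hW (fun b => (h b).2) hq)
        (ker_le_ker_of_span_range_comp_eq_top hW hV (fun b => (h b).1) hp)
    refine .inr (LinearMap.exists_linearEquiv_eq_graph hp hq fun x y => ?_)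
    simpa [sub_eq_zero] using SetLike.ext_iff.1 hker (x - y)
  · exact .inl ⟨hp, hpq.not.1 hp⟩

end DivisionRing

theorem even_card_subtype_fin_two_iff (P : Fin 2 → Prop) :
    Even (Nat.card {i // P i}) ↔ (P 0 ↔ P 1) := by
  classical
  rw [Nat.card_eq_fintype_card, Fintype.card_subtype, Finset.card_filter, Fin.sum_univ_two]
  by_cases h0 : P 0 <;> by_cases h1 : P 1 <;> simp [h0, h1]

theorem mk_mem_range_prod_proj_iff {R : Type*} [Semiring R] {A : Fin 2 → Type*}
    [∀ i, AddCommMonoid (A i)] [∀ i, Module R (A i)] {B : Submodule R (∀ i, A i)} {x : ∀ i, A i} :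
    (x 0, x 1) ∈ ((LinearMap.proj 0 ∘ₗ B.subtype).prod (LinearMap.proj 1 ∘ₗ B.subtype)).range ↔
      x ∈ B := by
  refine ⟨?_, fun hx => ⟨⟨x, hx⟩, rfl⟩⟩
  rintro ⟨y, hy⟩
  have hyx : y = x := funext (Fin.forall_fin_two.2 (Prod.ext_iff.1 hy))
  exact hyx ▸ y.2

theorem stmt_1_general {K : Type*} [DivisionRing K] {A : Fin 2 → Type*} [∀ i, AddCommGroup (A i)]
    [∀ i, Module K (A i)] (hdim : ∀ i, finrank K (A i) = 2) (B : Submodule K (∀ i, A i))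
    (hB : ∀ b₁ ∈ B, ∀ b₂ ∈ B, Even (Nat.card {i : Fin 2 //
      map (LinearMap.proj i) (span K {b₁, b₂}) = ⊤})) :
    (∃ a₁ : A 0, a₁ ≠ 0 ∧ ∃ a₂ : A 1, a₂ ≠ 0 ∧
      ∀ x ∈ B, (∃ c : K, x 0 = c • a₁) ∧ (∃ c : K, x 1 = c • a₂)) ∨
    (∃ f : A 0 ≃ₗ[K] A 1, ∀ x : ∀ i, A i, x ∈ B ↔ x 1 = f (x 0)) := by
  have (i : Fin 2) : FiniteDimensional K (A i) := .of_finrank_eq_succ (hdim i)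
  let π (i : Fin 2) : B →ₗ[K] A i := LinearMap.proj i ∘ₗ B.subtype
  have hπ (b : Fin 2 → B) :
      span K (Set.range (π 0 ∘ b)) = ⊤ ↔ span K (Set.range (π 1 ∘ b)) = ⊤ := by
    have hrange (i : Fin 2) : Set.range (π i ∘ b) = {(b 0 : ∀ i, A i) i, (b 1 : ∀ i, A i) i} := by
      ext; simp [π, Fin.exists_fin_two, eq_comm]
    simpa only [hrange, map_span, Set.image_pair, LinearMap.proj_apply]
      using (even_card_subtype_fin_two_iff _).1 (hB _ (b 0).2 _ (b 1).2)
  rcases not_surjective_and_or_exists_range_prod_eq_graph (hdim 0) (hdim 1) hπ with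
    ⟨h0, h1⟩ | ⟨e, he⟩
  · obtain ⟨a₁, ha₁, hline₁⟩ :=
      exists_ne_zero_forall_mem_eq_smul (hdim 0) (LinearMap.range_eq_top.not.2 h0)
    obtain ⟨a₂, ha₂, hline₂⟩ :=
      exists_ne_zero_forall_mem_eq_smul (hdim 1) (LinearMap.range_eq_top.not.2 h1)
    exact .inl ⟨a₁, ha₁, a₂, ha₂, fun x hx => ⟨hline₁ _ ⟨⟨x, hx⟩, rfl⟩, hline₂ _ ⟨⟨x, hx⟩, rfl⟩⟩⟩
  · refine .inr ⟨e, fun x => ?_⟩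
    rw [← mk_mem_range_prod_proj_iff, he, LinearMap.mem_graph_iff]
    rfl

/-- Lemma on subspaces of `A₁ ⊕ A₂` over `𝔽₂` such that for any two
elements, the number of coordinates onto which the projection of their span is
surjective is even. -/
theorem stmt_1 {A : Fin 2 → Type*} [∀ i, AddCommGroup (A i)] [∀ i, Module (ZMod 2) (A i)]
    (hdim : ∀ i, Module.finrank (ZMod 2) (A i) = 2)
    (B : Submodule (ZMod 2) (∀ i, A i))
    (hB : ∀ b₁ ∈ B, ∀ b₂ ∈ B, Even (Nat.card {i : Fin 2 //
      Submodule.map (LinearMap.proj i) (Submodule.span (ZMod 2) {b₁, b₂}) = ⊤})) :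
    (∃ a₁ : A 0, a₁ ≠ 0 ∧ ∃ a₂ : A 1, a₂ ≠ 0 ∧
      ∀ x ∈ B, (∃ c : ZMod 2, x 0 = c • a₁) ∧ (∃ c : ZMod 2, x 1 = c • a₂)) ∨
    (∃ f : A 0 ≃ₗ[ZMod 2] A 1, ∀ x : ∀ i, A i, x ∈ B ↔ x 1 = f (x 0)) :=
  stmt_1_general hdim B hB
end

section
/- Let Q₈ denote the quaternion group {±1, ±i, ±j, ±k} of order 8, and let K be the subgroup of Q₈ × Q₈ × Q₈ consisting of the triples (ε₁, ε₂, ε₃) with each ε_l ∈ {1, −1} and ε₁ε₂ε₃ = 1. Set G = (Q₈ × Q₈ × Q₈)/K. Then each of the following three subgroups of G is a maximal abelian subgroup: (a) ⟨i⟩³/K, the image of ⟨i⟩ × ⟨i⟩ × ⟨i⟩; (b) the image in G of the set {(x, x, y) : x ∈ Q₈, y ∈ ⟨i⟩}; (c) the subgroup of G generated by the images of (i,i,i), (j,j,i), and (i,j,j). -/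
/-- A subgroup is maximal abelian if it is commutative and every commutative
subgroup containing it equals it. -/
def IsMaximalAbelian {G : Type*} [Group G] (H : Subgroup G) : Prop :=
  IsMulCommutative H ∧ ∀ H' : Subgroup G, IsMulCommutative H' → H ≤ H' → H' = H

/-!
A subgroup is maximal abelian exactly when it is its own centralizer, and the images of two tuples
modulo `K` commute exactly when the tuple of their coordinate commutators lies in `K`. These
commutators are `±1`, so the condition is that their product is trivial. Testing an element against
the given subgroup then determines it: in (a) each coordinate commutes with `i`; in (b) the first
two coordinates agree up to sign and the third commutes with `i`; in (c) one clears the middle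
coordinate using `(i, i, i)` and `(j, j, i)`, and then the outer coordinates are either both `±1` or
both `±k`, the latter being accounted for by `(j, j, i) * (i, j, j)`.
-/

open Subgroup QuotientGroup
open scoped commutatorElement IsMulCommutative

section MaximalAbelian

variable {G : Type*} [Group G]

theorem isMaximalAbelian_iff_centralizer_eq {H : Subgroup G} :
    IsMaximalAbelian H ↔ centralizer (H : Set G) = H := by
  constructor
  · rintro ⟨hH, hmax⟩
    refine le_antisymm (fun g hg => ?_) (le_centralizer_iff_isMulCommutative.2 hH)
    have hcomm : IsMulCommutative (closure (insert g (H : Set G))) := by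
      refine isMulCommutative_closure ?_
      rintro x (rfl | hx) y (rfl | hy)
      · rfl
      · exact (mem_centralizer_iff.1 hg y hy).symm
      · exact mem_centralizer_iff.1 hg x hx
      · exact mem_centralizer_iff.1 (le_centralizer_iff_isMulCommutative.2 hH hy) x hx
    have hle : H ≤ closure (insert g (H : Set G)) :=
      (Set.subset_insert g (H : Set G)).trans subset_closure
    exact (hmax _ hcomm hle).le (subset_closure (Set.mem_insert g _))
  · intro h
    refine ⟨le_centralizer_iff_isMulCommutative.1 h.ge, fun H' hH' hle => le_antisymm ?_ hle⟩
    calc H' ≤ centralizer (H' : Set G) := le_centralizer_iff_isMulCommutative.2 hH'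
      _ ≤ centralizer (H : Set G) := centralizer_le hle
      _ = H := h

theorem IsMaximalAbelian.center_le {H : Subgroup G} (hH : IsMaximalAbelian H) : center G ≤ H :=
  (center_le_centralizer (H : Set G)).trans (isMaximalAbelian_iff_centralizer_eq.1 hH).le

theorem isMaximalAbelian_closure_iff {S : Set G} :
    IsMaximalAbelian (closure S) ↔ S ⊆ centralizer S ∧ centralizer S ≤ closure S := by
  rw [isMaximalAbelian_iff_centralizer_eq, centralizer_closure, le_antisymm_iff, closure_le,
    and_comm]

theorem inv_mul_mem_center_of_commutatorElement_eq {S : Set G} (hS : closure S = ⊤) {x y : G}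
    (h : ∀ s ∈ S, ⁅s, x⁆ = ⁅s, y⁆) : x⁻¹ * y ∈ center G := by
  rw [← centralizer_univ, ← coe_top, ← hS, centralizer_closure]
  intro s hs
  have hconj : x * s⁻¹ * x⁻¹ = y * s⁻¹ * y⁻¹ := by
    simpa only [commutatorElement_def, mul_assoc, mul_right_inj] using h s hs
  calc s * (x⁻¹ * y) = x⁻¹ * (x * s⁻¹ * x⁻¹)⁻¹ * y := by group
    _ = x⁻¹ * y * s := by rw [hconj]; group

variable (N : Subgroup G) [N.Normal]

theorem commute_mk'_iff {g h : G} : Commute (mk' N g) (mk' N h) ↔ ⁅g, h⁆ ∈ N := by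
  rw [← commutatorElement_eq_one_iff_commute, ← map_commutatorElement, mk'_apply, eq_one_iff]

theorem isMaximalAbelian_map_mk'_iff {S : Subgroup G} :
    IsMaximalAbelian (S.map (mk' N)) ↔
      (∀ s ∈ S, ∀ t ∈ S, ⁅s, t⁆ ∈ N) ∧
        ∀ t, (∀ s ∈ S, ⁅s, t⁆ ∈ N) → mk' N t ∈ S.map (mk' N) := by
  have hcentralizer (t : G) :
      mk' N t ∈ centralizer (S.map (mk' N) : Set (G ⧸ N)) ↔ ∀ s ∈ S, ⁅s, t⁆ ∈ N := by
    simp only [mem_centralizer_iff, coe_map, Set.forall_mem_image, SetLike.mem_coe,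
      ← commute_mk'_iff, Commute, SemiconjBy]
  rw [isMaximalAbelian_iff_centralizer_eq, le_antisymm_iff, and_comm, map_le_iff_le_comap]
  refine and_congr ⟨fun h s hs t ht => (hcentralizer t).1 (h ht) s hs,
    fun h t ht => (hcentralizer t).2 fun s hs => h s hs t ht⟩ ⟨fun h t ht => h ?_, ?_⟩
  · exact (hcentralizer t).2 ht
  · intro h x hx
    obtain ⟨t, rfl⟩ := mk'_surjective N x
    exact h t ((hcentralizer t).1 hx)

end MaximalAbelian

section CentralPower

theorem commutatorElement_mulSingle {ι Q : Type*} [DecidableEq ι] [Group Q] (l : ι) (x : Q)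
    (t : ι → Q) :
    ⁅(Pi.mulSingle l x : ι → Q), t⁆ = Pi.mulSingle l ⁅x, t l⁆ := by
  funext m
  change ⁅Pi.mulSingle (M := fun _ => Q) l x m, t m⁆ = _
  obtain rfl | hm := eq_or_ne m l <;> simp [*]

/-- The tuples of central elements of `Q` with product `1`. The quotient of `ι → Q` by this subgroup
is the central product of copies of `Q` indexed by `ι`, with all the centres identified. -/
def centralPowerKernel (ι Q : Type*) [Fintype ι] [Group Q] : Subgroup (ι → Q) :=
  (∏ l, Pi.evalMonoidHom (fun _ : ι => center Q) l).ker.map ((center Q).subtype.compLeft ι)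

variable {ι Q : Type*} [Fintype ι] [Group Q]

theorem mem_centralPowerKernel {t : ι → Q} :
    t ∈ centralPowerKernel ι Q ↔ ∃ z : ι → center Q, ∏ l, z l = 1 ∧ ∀ l, (z l : Q) = t l := by
  simp [centralPowerKernel, mem_map, MonoidHom.mem_ker, funext_iff]

instance : (centralPowerKernel ι Q).Normal := by
  refine ⟨fun t ht g => ?_⟩
  obtain ⟨z, -, hz⟩ := mem_centralPowerKernel.1 ht
  suffices h : g * t * g⁻¹ = t from h.symm ▸ ht
  refine mul_inv_eq_of_eq_mul (funext fun l => ?_)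
  simpa only [Pi.mul_apply, ← hz l] using mem_center_iff.1 (z l).2 (g l)

theorem mulSingle_mem_centralPowerKernel [DecidableEq ι] {l : ι} {x : Q} :
    Pi.mulSingle l x ∈ centralPowerKernel ι Q ↔ x = 1 := by
  refine ⟨fun h => ?_, fun h => by simp [h]⟩
  obtain ⟨z, hprod, hz⟩ := mem_centralPowerKernel.1 h
  have hz_ne (m : ι) (hm : m ≠ l) : z m = 1 := by
    rw [← OneMemClass.coe_eq_one, hz, Pi.mulSingle_eq_of_ne hm]
  rw [← Pi.mulSingle_eq_same (M := fun _ => Q) l x, ← hz l, OneMemClass.coe_eq_one, ← hprod]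
  exact (Fintype.prod_eq_single l hz_ne).symm

theorem IsMaximalAbelian.map_pi {A : ι → Subgroup Q} (hA : ∀ l, IsMaximalAbelian (A l)) :
    IsMaximalAbelian ((pi Set.univ A).map (mk' (centralPowerKernel ι Q))) := by
  classical
  have hcentralizer (l : ι) := isMaximalAbelian_iff_centralizer_eq.1 (hA l)
  refine (isMaximalAbelian_map_mk'_iff _).2 ⟨fun s hs t ht => ?_, fun t ht => ?_⟩
  · suffices h : ⁅s, t⁆ = 1 from h ▸ one_mem _
    funext l
    have htl : t l ∈ centralizer (A l : Set Q) := (hcentralizer l).ge (ht l trivial)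
    exact commutatorElement_eq_one_iff_mul_comm.2 (htl _ (hs l trivial))
  · refine mem_map_of_mem _ fun l _ => (hcentralizer l).le fun x hx => ?_
    have hmem := ht _ ((mulSingle_mem_pi l x).2 fun _ => hx)
    rw [commutatorElement_mulSingle, mulSingle_mem_centralPowerKernel] at hmem
    exact commutatorElement_eq_one_iff_mul_comm.1 hmem

end CentralPower

section CentralCube

variable {Q : Type*} [Group Q]

theorem mem_centralPowerKernel_fin_three {t : Fin 3 → Q} :
    t ∈ centralPowerKernel (Fin 3) Q ↔ (∀ l, t l ∈ center Q) ∧ t 0 * t 1 * t 2 = 1 := by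
  simp only [mem_centralPowerKernel, Fin.prod_univ_three, ← OneMemClass.coe_eq_one, coe_mul]
  constructor
  · rintro ⟨z, hprod, hz⟩
    simp only [hz] at hprod
    exact ⟨fun l => hz l ▸ (z l).2, hprod⟩
  · rintro ⟨ht, hprod⟩
    exact ⟨fun l => ⟨t l, ht l⟩, hprod, fun _ => rfl⟩

theorem commutatorElement_mem_centralPowerKernel_fin_three (hQ : ∀ x y : Q, ⁅x, y⁆ ∈ center Q)
    {s t : Fin 3 → Q} :
    ⁅s, t⁆ ∈ centralPowerKernel (Fin 3) Q ↔ ⁅s 0, t 0⁆ * ⁅s 1, t 1⁆ * ⁅s 2, t 2⁆ = 1 :=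
  mem_centralPowerKernel_fin_three.trans (and_iff_right fun _ => hQ _ _)

theorem isMaximalAbelian_map_diagonal (hQ : ∀ x y : Q, ⁅x, y⁆ ∈ center Q)
    (hsq : ∀ x y : Q, ⁅x, y⁆ * ⁅x, y⁆ = 1) {A : Subgroup Q} (hA : IsMaximalAbelian A)
    {S : Subgroup (Fin 3 → Q)} (hS : ∀ t, t ∈ S ↔ t 0 = t 1 ∧ t 2 ∈ A) :
    IsMaximalAbelian (S.map (mk' (centralPowerKernel (Fin 3) Q))) := by
  have hcentralizer := isMaximalAbelian_iff_centralizer_eq.1 hA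
  simp only [isMaximalAbelian_map_mk'_iff, commutatorElement_mem_centralPowerKernel_fin_three hQ]
  constructor
  · intro s hs t ht
    obtain ⟨hs₀₁, hs₂⟩ := (hS s).1 hs
    obtain ⟨ht₀₁, ht₂⟩ := (hS t).1 ht
    rw [hs₀₁, ht₀₁, hsq, one_mul, commutatorElement_eq_one_iff_mul_comm]
    exact hcentralizer.ge ht₂ _ hs₂
  · intro t ht
    have hcentral : (t 0)⁻¹ * t 1 ∈ center Q := by
      refine inv_mul_mem_center_of_commutatorElement_eq closure_univ fun x _ => ?_
      have hx : ⁅x, t 0⁆ * ⁅x, t 1⁆ = 1 := by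
        simpa using ht ![x, x, 1] ((hS _).2 ⟨rfl, one_mem A⟩)
      exact mul_right_cancel (hx.trans (hsq x (t 1)).symm)
    have ht₂ : t 2 ∈ A := hcentralizer.le fun x hx => by
      simpa [commutatorElement_eq_one_iff_mul_comm] using
        ht ![1, 1, x] ((hS _).2 ⟨rfl, hx⟩)
    -- Modulo the kernel, the central discrepancy of the first two entries moves to the third one.
    refine mem_map.2 ⟨![t 0, t 0, t 2 * ((t 0)⁻¹ * t 1)],
      (hS _).2 ⟨rfl, mul_mem ht₂ (hA.center_le hcentral)⟩, ?_⟩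
    rw [mk'_apply, mk'_apply, QuotientGroup.eq, mem_centralPowerKernel_fin_three]
    refine ⟨fun l => ?_, by simp [mul_assoc]⟩
    fin_cases l
    · simp
    · exact hcentral
    · simpa using inv_mem hcentral

end CentralCube

section Quaternion

open QuaternionGroup

theorem a_one_zpow (n : ℕ) (m : ℤ) : (a 1 : QuaternionGroup n) ^ m = a m := by
  obtain ⟨k, rfl | rfl⟩ := m.eq_nat_or_neg
  · simp
  · rw [zpow_neg, zpow_natCast, a_one_pow, Int.cast_neg, Int.cast_natCast]
    rfl

theorem a_mem_zpowers_a_one {n : ℕ} (k : ZMod (2 * n)) :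
    a k ∈ zpowers (a 1 : QuaternionGroup n) := by
  obtain ⟨m, rfl⟩ := ZMod.intCast_surjective k
  exact ⟨m, a_one_zpow n m⟩

theorem isMaximalAbelian_zpowers_a_one {n : ℕ} (hn : n ≠ 1) :
    IsMaximalAbelian (zpowers (a 1 : QuaternionGroup n)) := by
  rw [zpowers_eq_closure, isMaximalAbelian_closure_iff, ← zpowers_eq_closure]
  refine ⟨by simp [mem_centralizer_iff], fun x hx => ?_⟩
  have hcomm : a 1 * x = x * a 1 := mem_centralizer_iff.1 hx _ rfl
  rcases x with k | k
  · exact a_mem_zpowers_a_one k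
  · have htwo : ((2 : ℕ) : ZMod (2 * n)) = 0 := by
      simp only [a_mul_xa, xa_mul_a, xa.injEq] at hcomm
      linear_combination -hcomm
    have hdvd : 2 * n ∣ 2 * 1 := (ZMod.natCast_eq_zero_iff _ _).1 htwo
    exact absurd (Nat.dvd_one.1 (Nat.dvd_of_mul_dvd_mul_left two_pos hdvd)) hn

theorem closure_a_one_xa_zero (n : ℕ) :
    closure {(a 1 : QuaternionGroup n), xa 0} = ⊤ := by
  have ha (k : ZMod (2 * n)) : a k ∈ closure {(a 1 : QuaternionGroup n), xa 0} :=
    zpowers_le.2 (subset_closure (Set.mem_insert _ _)) (a_mem_zpowers_a_one k)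
  refine eq_top_iff.2 fun x _ => ?_
  rcases x with k | k
  · exact ha k
  · have hxa : xa 0 * a k = xa k := by simp
    exact hxa ▸ mul_mem (subset_closure (Or.inr rfl)) (ha k)

end Quaternion

section QuaternionCube

open QuaternionGroup

local notation "Q₈" => QuaternionGroup 2

local notation "𝐢" => (a 1 : QuaternionGroup 2)

local notation "𝐣" => (xa 0 : QuaternionGroup 2)

local notation "K₈" => centralPowerKernel (Fin 3) (QuaternionGroup 2)

theorem mem_center_quaternionGroup_two : ∀ {x : Q₈}, x ∈ center Q₈ ↔ x = 1 ∨ x = a 2 := by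
  decide

theorem commutatorElement_mem_center_quaternionGroup_two : ∀ x y : Q₈, ⁅x, y⁆ ∈ center Q₈ := by
  decide

theorem commutatorElement_mul_self_quaternionGroup_two : ∀ x y : Q₈, ⁅x, y⁆ * ⁅x, y⁆ = 1 := by
  decide

theorem mem_centralPowerKernel_quaternionGroup_two {t : Fin 3 → Q₈} :
    t ∈ K₈ ↔ (∀ l, t l = 1 ∨ t l = a 2) ∧ t 0 * t 1 * t 2 = 1 := by
  simp only [mem_centralPowerKernel_fin_three, mem_center_quaternionGroup_two]

theorem commute_mk'_quaternionGroup_two_iff {s t : Fin 3 → Q₈} :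
    Commute (mk' K₈ s) (mk' K₈ t) ↔ ⁅s 0, t 0⁆ * ⁅s 1, t 1⁆ * ⁅s 2, t 2⁆ = 1 :=
  (commute_mk'_iff _).trans (commutatorElement_mem_centralPowerKernel_fin_three
    commutatorElement_mem_center_quaternionGroup_two)

theorem exists_mem_closure_apply_one_eq (y : Q₈) :
    ∃ h ∈ closure {![𝐢, 𝐢, 𝐢], ![𝐣, 𝐣, 𝐢]}, (h : Fin 3 → Q₈) 1 = y := by
  have hmap : (closure {![𝐢, 𝐢, 𝐢], ![𝐣, 𝐣, 𝐢]}).map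
      (Pi.evalMonoidHom (fun _ : Fin 3 => Q₈) 1) = ⊤ := by
    rw [MonoidHom.map_closure, Set.image_pair]
    exact closure_a_one_xa_zero 2
  exact mem_map.1 (hmap.ge (mem_top y))

theorem mul_eq_one_or_mul_sq_eq_one_of_mem_center : ∀ x ∈ center Q₈, ∀ y ∈ center Q₈,
    ∀ z ∈ center Q₈, x * y * z = 1 ∨ x * 𝐢 ^ 2 * (y * 𝐢 ^ 2) * (z * 𝐢 ^ 2) = 1 := by
  decide

-- The group of tuples of central elements is generated by `K₈` and `(i, i, i) ^ 2`.
theorem mk'_mem_of_forall_mem_center {H : Subgroup ((Fin 3 → Q₈) ⧸ K₈)}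
    (hH : mk' K₈ ![𝐢, 𝐢, 𝐢] ∈ H) {z : Fin 3 → Q₈} (hz : ∀ l, z l ∈ center Q₈) :
    mk' K₈ z ∈ H := by
  have mk'_mem {w : Fin 3 → Q₈} (hw : w ∈ K₈) : mk' K₈ w ∈ H := by
    rw [mk'_apply, (eq_one_iff w).2 hw]
    exact one_mem H
  rcases mul_eq_one_or_mul_sq_eq_one_of_mem_center _ (hz 0) _ (hz 1) _ (hz 2) with hprod | hprod
  · exact mk'_mem (mem_centralPowerKernel_fin_three.2 ⟨hz, hprod⟩)
  · rw [← mul_mem_cancel_right (pow_mem hH 2), ← map_pow, ← map_mul]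
    refine mk'_mem (mem_centralPowerKernel_fin_three.2 ⟨fun l => mul_mem (hz l) ?_, hprod⟩)
    fin_cases l <;> decide

theorem mk'_mem_of_forall_inv_mul_mem_center {H : Subgroup ((Fin 3 → Q₈) ⧸ K₈)}
    (hH : mk' K₈ ![𝐢, 𝐢, 𝐢] ∈ H) {s t : Fin 3 → Q₈} (hs : mk' K₈ s ∈ H)
    (hst : ∀ l, (s l)⁻¹ * t l ∈ center Q₈) : mk' K₈ t ∈ H := by
  rw [← mul_mem_cancel_left (inv_mem hs), ← map_inv, ← map_mul]
  exact mk'_mem_of_forall_mem_center hH hst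

/-- The images of `(i, i, i)`, `(j, j, i)` and `(i, j, j)` in the central product of three copies
of `Q₈`. -/
abbrev mixedGenerators : Set ((Fin 3 → Q₈) ⧸ K₈) :=
  {mk' K₈ ![𝐢, 𝐢, 𝐢], mk' K₈ ![𝐣, 𝐣, 𝐢], mk' K₈ ![𝐢, 𝐣, 𝐣]}

theorem mixedGenerators_subset_centralizer : mixedGenerators ⊆ centralizer mixedGenerators := by
  rintro _ (rfl | rfl | rfl) _ (rfl | rfl | rfl) <;>
    exact commute_mk'_quaternionGroup_two_iff.2 (by decide)

theorem exists_mk'_mem_closure_mixedGenerators_commutatorElement_eq {c : Q₈}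
    (hc : c ∈ center Q₈) : ∃ s : Fin 3 → Q₈, mk' K₈ s ∈ closure mixedGenerators ∧
      s 1 ∈ center Q₈ ∧ ∀ g ∈ ({𝐢, 𝐣} : Set Q₈), ⁅g, s 0⁆ = c ∧ ⁅g, s 2⁆ = c := by
  rcases mem_center_quaternionGroup_two.1 hc with rfl | rfl
  · exact ⟨1, one_mem _, one_mem _, by simp⟩
  · -- This product is `(-k, -1, k)`, and `k` anticommutes with `i` and `j`.
    refine ⟨![𝐣, 𝐣, 𝐢] * ![𝐢, 𝐣, 𝐣], ?_, by decide, ?_⟩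
    · rw [map_mul]
      exact mul_mem (subset_closure (Or.inr (Or.inl rfl))) (subset_closure (Or.inr (Or.inr rfl)))
    · rintro g (rfl | rfl) <;> decide

theorem mk'_mem_closure_mixedGenerators_of_apply_one_eq_one {t : Fin 3 → Q₈}
    (ht : mk' K₈ t ∈ centralizer mixedGenerators) (ht₁ : t 1 = 1) :
    mk' K₈ t ∈ closure mixedGenerators := by
  have hiii : mk' K₈ ![𝐢, 𝐢, 𝐢] ∈ mixedGenerators := Or.inl rfl
  have h₁ := commute_mk'_quaternionGroup_two_iff.1 (ht _ hiii)
  have h₂ := commute_mk'_quaternionGroup_two_iff.1 (ht _ (Or.inr (Or.inl rfl)))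
  have h₃ := commute_mk'_quaternionGroup_two_iff.1 (ht _ (Or.inr (Or.inr rfl)))
  simp only [ht₁, commutatorElement_one_right, mul_one, Matrix.cons_val] at h₁ h₂ h₃
  have hj₀ : ⁅𝐣, t 0⁆ = ⁅𝐢, t 0⁆ := mul_right_cancel (h₂.trans h₁.symm)
  have hi₂ : ⁅𝐢, t 2⁆ = ⁅𝐢, t 0⁆ :=
    mul_left_cancel (h₁.trans (commutatorElement_mul_self_quaternionGroup_two 𝐢 (t 0)).symm)
  have hj₂ : ⁅𝐣, t 2⁆ = ⁅𝐢, t 0⁆ := (mul_left_cancel (h₃.trans h₁.symm)).trans hi₂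
  obtain ⟨s, hs, hs₁, hst⟩ := exists_mk'_mem_closure_mixedGenerators_commutatorElement_eq
    (commutatorElement_mem_center_quaternionGroup_two 𝐢 (t 0))
  refine mk'_mem_of_forall_inv_mul_mem_center (subset_closure hiii) hs fun l => ?_
  fin_cases l
  · refine inv_mul_mem_center_of_commutatorElement_eq (closure_a_one_xa_zero 2) ?_
    rintro g (rfl | rfl)
    exacts [(hst _ (Or.inl rfl)).1, (hst _ (Or.inr rfl)).1.trans hj₀.symm]
  · simpa [ht₁] using hs₁
  · refine inv_mul_mem_center_of_commutatorElement_eq (closure_a_one_xa_zero 2) ?_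
    rintro g (rfl | rfl)
    exacts [(hst _ (Or.inl rfl)).2.trans hi₂.symm, (hst _ (Or.inr rfl)).2.trans hj₂.symm]

theorem isMaximalAbelian_closure_mixedGenerators :
    IsMaximalAbelian (closure mixedGenerators) := by
  refine isMaximalAbelian_closure_iff.2 ⟨mixedGenerators_subset_centralizer, fun x hx => ?_⟩
  obtain ⟨t, rfl⟩ := mk'_surjective K₈ x
  obtain ⟨h, hh, hht⟩ := exists_mem_closure_apply_one_eq (t 1)
  have hmem : mk' K₈ h ∈ closure mixedGenerators := by
    have himage := mem_map_of_mem (mk' K₈) hh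
    rw [MonoidHom.map_closure, Set.image_pair] at himage
    exact closure_mono (by grind) himage
  have hcentralizer : mk' K₈ h ∈ centralizer mixedGenerators :=
    (closure_le _).2 mixedGenerators_subset_centralizer hmem
  rw [← mul_mem_cancel_left (inv_mem hmem), ← map_inv, ← map_mul]
  refine mk'_mem_closure_mixedGenerators_of_apply_one_eq_one ?_ (by simp [hht])
  rw [map_mul, map_inv]
  exact mul_mem (inv_mem hcentralizer) hx

end QuaternionCube

/-- in `G = (Q₈ × Q₈ × Q₈)/K`, the image of `⟨i⟩ × ⟨i⟩ × ⟨i⟩`, the image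
of `{(x,x,y) : x ∈ Q₈, y ∈ ⟨i⟩}`, and the subgroup generated by the images of
`(i,i,i)`, `(j,j,i)` and `(i,j,j)` are maximal abelian subgroups.
Here `Q₈ = QuaternionGroup 2`, `i = QuaternionGroup.a 1`, `j = QuaternionGroup.xa 0`,
`-1 = QuaternionGroup.a 2`. -/
theorem stmt_4 (K : Subgroup (Fin 3 → QuaternionGroup 2)) [K.Normal]
    (hK : ∀ t, t ∈ K ↔
      ((∀ l, t l = 1 ∨ t l = QuaternionGroup.a 2) ∧ t 0 * t 1 * t 2 = 1))
    (Sb : Subgroup (Fin 3 → QuaternionGroup 2))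
    (hSb : ∀ t, t ∈ Sb ↔ (t 0 = t 1 ∧ t 2 ∈ Subgroup.zpowers (QuaternionGroup.a 1))) :
    IsMaximalAbelian
      (Subgroup.map (QuotientGroup.mk' K)
        (Subgroup.pi Set.univ fun _ => Subgroup.zpowers (QuaternionGroup.a 1))) ∧
    IsMaximalAbelian (Subgroup.map (QuotientGroup.mk' K) Sb) ∧
    IsMaximalAbelian
      (Subgroup.closure
        {QuotientGroup.mk' K
            ![QuaternionGroup.a 1, QuaternionGroup.a 1, QuaternionGroup.a 1],
         QuotientGroup.mk' K
            ![QuaternionGroup.xa 0, QuaternionGroup.xa 0, QuaternionGroup.a 1],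
         QuotientGroup.mk' K
            ![QuaternionGroup.a 1, QuaternionGroup.xa 0, QuaternionGroup.xa 0]}) := by
  obtain rfl : K = centralPowerKernel (Fin 3) (QuaternionGroup 2) :=
    Subgroup.ext fun t => (hK t).trans mem_centralPowerKernel_quaternionGroup_two.symm
  have hi : IsMaximalAbelian (zpowers (QuaternionGroup.a 1 : QuaternionGroup 2)) :=
    isMaximalAbelian_zpowers_a_one (by decide)
  exact ⟨IsMaximalAbelian.map_pi fun _ => hi,
    isMaximalAbelian_map_diagonal commutatorElement_mem_center_quaternionGroup_two
      commutatorElement_mul_self_quaternionGroup_two hi hSb,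
    isMaximalAbelian_closure_mixedGenerators⟩
end

section
/- Let F be an algebraically closed field of characteristic 0 with multiplicative group F^×, let Q₈ denote the quaternion group {±1, ±i, ±j, ±k} of order 8, and let K be the subgroup of F^× × Q₈ × Q₈ consisting of the triples (ε₁, ε₂, ε₃) with each ε_l ∈ {1, −1} and ε₁ε₂ε₃ = 1. Set G = (F^× × Q₈ × Q₈)/K. If H is a maximal abelian subgroup of G, then there exists an automorphism ψ of G, lying in the subgroup of Aut(G) generated by the automorphisms induced by pairs (φ₂, φ₃) of automorphisms of Q₈ acting componentwise on the two Q₈ factors, such that ψ(H) is one of the following subgroups of G: (a) (F^× × ⟨i⟩ × ⟨i⟩)/K, the image of F^× × ⟨i⟩ × ⟨i⟩; (b) the image in G of the set {(μ, x, x) : μ ∈ F^×, x ∈ Q₈}. -/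
/-
Two elements of `G` commute iff their `Q₈ × Q₈`-components commute either in both factors or in
neither: the commutator of a non-commuting pair in `Q₈` is `-1`, and of the triples `(1, ±1, ±1)`
exactly `(1, 1, 1)` and `(1, -1, -1)` lie in `K`.
Let `H ≤ G` be abelian. If the first components of `H` commute, then so do the second ones, and
each set of components can be moved into `⟨i⟩`. Otherwise pick `s, t ∈ H` with non-commuting first
(hence also second) components, and use that `Aut Q₈` acts transitively on non-commuting pairs to
move both pairs of components to `(i, j)`. The components of any `r ∈ H` then have the same
commutation behaviour with `i` and `j`, so they agree up to sign, and the sign is absorbed into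
`F^×`. Since both target subgroups are abelian, a maximal `H` is moved onto one of them.
-/

open QuaternionGroup
open scoped commutatorElement

section MaximalAbelian

variable {G G' : Type*} [Group G] [Group G'] {H T : Subgroup G}

theorem IsMaximalAbelian.eq_of_le (hH : IsMaximalAbelian H) [IsMulCommutative T] (hle : H ≤ T) :
    H = T :=
  (hH.2 T inferInstance hle).symm

theorem IsMaximalAbelian.map_mulEquiv (hH : IsMaximalAbelian H) (e : G ≃* G') :
    IsMaximalAbelian (H.map e.toMonoidHom) := by
  have := hH.1
  refine ⟨inferInstance, fun T hT hle => ?_⟩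
  have : IsMulCommutative (T.comap e.toMonoidHom) :=
    T.comap_injective_isMulCommutative e.injective
  rw [hH.eq_of_le (Subgroup.map_le_iff_le_comap.mp hle)]
  exact (Subgroup.map_comap_eq_self_of_surjective e.surjective T).symm

end MaximalAbelian

theorem commute_mk'_iff_commutatorElement_mem {G : Type*} [Group G] (N : Subgroup G) [N.Normal]
    {s t : G} : Commute (QuotientGroup.mk' N s) (QuotientGroup.mk' N t) ↔ ⁅s, t⁆ ∈ N := by
  rw [← commutatorElement_eq_one_iff_commute, ← map_commutatorElement]
  exact QuotientGroup.eq_one_iff _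

section Lift

variable {G : Type*} [Group G] {x y : G}

theorem zpow_zmod_cast_intCast {m : ℕ} (hx : x ^ m = 1) (k : ℤ) :
    x ^ ((k : ZMod m).cast : ℤ) = x ^ k := by
  have hmod : ((k : ZMod m).cast : ℤ) ≡ k [ZMOD m] :=
    (ZMod.intCast_eq_intCast_iff _ _ _).mp (ZMod.intCast_zmod_cast _)
  exact zpow_eq_zpow_iff_modEq.mpr
    (hmod.of_dvd (Int.natCast_dvd_natCast.mpr (orderOf_dvd_of_pow_eq_one hx)))

variable {n : ℕ}

theorem pow_two_mul_eq_one_of_semiconjBy_inv (hyx : SemiconjBy y x x⁻¹) (hy : y ^ 2 = x ^ n) :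
    x ^ (2 * n) = 1 := by
  have hconj : y * x ^ n = (x ^ n)⁻¹ * y := by simpa only [inv_pow] using (hyx.pow_right n).eq
  have hcomm : y * x ^ n = x ^ n * y := by rw [← hy, ← pow_succ, ← pow_succ']
  have hinv : x ^ n = (x ^ n)⁻¹ := mul_right_cancel (hcomm.symm.trans hconj)
  rw [two_mul, pow_add]
  exact mul_eq_one_iff_eq_inv.mpr hinv

/-- The homomorphism out of `QuaternionGroup n` determined by its presentation
`⟨x, y | y² = xⁿ, y x y⁻¹ = x⁻¹⟩`, where `x` and `y` are the images of `a 1` and `xa 0`. -/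
def quaternionLift (hyx : SemiconjBy y x x⁻¹) (hy : y ^ 2 = x ^ n) : QuaternionGroup n →* G :=
  MonoidHom.mk' (fun
    | a i => x ^ (i.cast : ℤ)
    | xa i => y * x ^ (i.cast : ℤ)) <| by
    have hpow := zpow_zmod_cast_intCast (pow_two_mul_eq_one_of_semiconjBy_inv hyx hy)
    have hswap (k : ℤ) : x ^ k * y = y * x ^ (-k) := by
      simpa only [inv_zpow', neg_neg] using ((hyx.zpow_right (-k)).eq).symm
    rintro (i | i) (j | j) <;> obtain ⟨i, rfl⟩ := ZMod.intCast_surjective i <;>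
      obtain ⟨j, rfl⟩ := ZMod.intCast_surjective j
    · simp only [a_mul_a, ← Int.cast_add, hpow, zpow_add]
    · simp only [a_mul_xa, ← Int.cast_sub, hpow]
      rw [← mul_assoc, hswap, mul_assoc, ← zpow_add, neg_add_eq_sub]
    · simp only [xa_mul_a, ← Int.cast_add, hpow, zpow_add, mul_assoc]
    · simp only [xa_mul_xa, ← Int.cast_natCast (R := ZMod (2 * n)) n, ← Int.cast_add,
        ← Int.cast_sub, hpow]
      calc x ^ ((n : ℤ) + j - i) = y ^ 2 * x ^ (-i + j) := by
            rw [hy, ← zpow_natCast, ← zpow_add]; congr 1; ring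
        _ = y * (x ^ i * y) * x ^ j := by rw [hswap, zpow_add, sq]; simp only [mul_assoc]
        _ = y * x ^ i * (y * x ^ j) := by simp only [mul_assoc]

theorem quaternionLift_a_natCast (hyx : SemiconjBy y x x⁻¹) (hy : y ^ 2 = x ^ n) (k : ℕ) :
    quaternionLift hyx hy (a k) = x ^ k := by
  have h := zpow_zmod_cast_intCast (pow_two_mul_eq_one_of_semiconjBy_inv hyx hy) k
  rwa [Int.cast_natCast, zpow_natCast] at h

theorem quaternionLift_xa_zero (hyx : SemiconjBy y x x⁻¹) (hy : y ^ 2 = x ^ n) :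
    quaternionLift hyx hy (xa 0) = y := by
  have h := zpow_zmod_cast_intCast (pow_two_mul_eq_one_of_semiconjBy_inv hyx hy) 0
  rw [Int.cast_zero, zpow_zero] at h
  exact mul_eq_left.mpr h

end Lift

/-- The quaternion group of order `8`, with `i = a 1`, `j = xa 0` and `-1 = a 2`. -/
abbrev Q8 : Type := QuaternionGroup 2

namespace Q8

variable {x y : Q8}

theorem orderOf_eq_two_iff : orderOf x = 2 ↔ x = a 2 := by
  rw [orderOf_eq_prime_iff]
  revert x
  decide +kernel

theorem mulAut_apply_a_two (φ : MulAut Q8) : φ (a 2) = a 2 :=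
  orderOf_eq_two_iff.mp ((MulEquiv.orderOf_eq φ _).trans (orderOf_eq_two_iff.mpr rfl))

theorem commutatorElement_eq_a_two (h : ¬Commute x y) : ⁅x, y⁆ = a 2 := by
  unfold Commute SemiconjBy at h
  revert x y
  decide +kernel

theorem mem_zpowers_of_commute_a_one (h : Commute x (a 1)) :
    x ∈ Subgroup.zpowers (a 1 : Q8) := by
  have hpow : ∀ x : Q8, x * a 1 = a 1 * x → ∃ k : Fin 4, a 1 ^ (k : ℕ) = x := by decide +kernel
  obtain ⟨k, rfl⟩ := hpow x h
  exact Subgroup.npow_mem_zpowers _ _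

theorem eq_or_eq_mul_a_two (hi : Commute x (a 1) ↔ Commute y (a 1))
    (hj : Commute x (xa 0) ↔ Commute y (xa 0)) : y = x ∨ y = x * a 2 := by
  unfold Commute SemiconjBy at hi hj
  revert x y
  decide +kernel

theorem relations_of_not_commute (h : ¬Commute x y) :
    x ^ 2 = a 2 ∧ y ^ 2 = x ^ 2 ∧ SemiconjBy y x x⁻¹ := by
  unfold Commute at h
  unfold SemiconjBy at h ⊢
  revert x y
  decide +kernel

theorem injective_of_map_a_two_ne_one {G : Type*} [Group G] {f : Q8 →* G} (h : f (a 2) ≠ 1) :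
    Function.Injective f := by
  have hsq : ∀ u : Q8, u = 1 ∨ u = a 2 ∨ u ^ 2 = a 2 := by decide +kernel
  refine (injective_iff_map_eq_one f).mpr fun u hu => ?_
  rcases hsq u with rfl | rfl | hu2
  · rfl
  · exact absurd hu h
  · exact absurd (by rw [← hu2, map_pow, hu, one_pow]) h

theorem exists_mulAut_map_eq (h : ¬Commute x y) : ∃ φ : MulAut Q8, φ x = a 1 ∧ φ y = xa 0 := by
  obtain ⟨hx, hy, hyx⟩ := relations_of_not_commute h
  let f : Q8 →* Q8 := quaternionLift hyx hy
  have hinj : Function.Injective f := by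
    refine injective_of_map_a_two_ne_one ?_
    rw [show f (a 2) = x ^ 2 from quaternionLift_a_natCast hyx hy 2, hx]
    decide
  let e : MulAut Q8 := MulEquiv.ofBijective f (Finite.injective_iff_bijective.mp hinj)
  have hi : e (a 1) = x := (quaternionLift_a_natCast hyx hy 1).trans (pow_one x)
  have hj : e (xa 0) = y := quaternionLift_xa_zero hyx hy
  exact ⟨e.symm, e.symm_apply_eq.mpr hi.symm, e.symm_apply_eq.mpr hj.symm⟩

theorem exists_mulAut_mapsTo_zpowers {S : Set Q8} (hS : ∀ x ∈ S, ∀ y ∈ S, Commute x y) :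
    ∃ φ : MulAut Q8, Set.MapsTo φ S (Subgroup.zpowers (a 1 : Q8)) := by
  by_cases hcentral : ∀ x ∈ S, ∀ y, Commute x y
  · exact ⟨1, fun x hx => mem_zpowers_of_commute_a_one (hcentral x hx _)⟩
  · push Not at hcentral
    obtain ⟨x, hx, y, hxy⟩ := hcentral
    obtain ⟨φ, hφx, -⟩ := exists_mulAut_map_eq hxy
    exact ⟨φ, fun z hz => mem_zpowers_of_commute_a_one (hφx ▸ (hS z hz x hx).map φ)⟩

end Q8

section CentralProduct

variable {A : Type*} [CommGroup A]

namespace Q8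

variable (A) in
/-- The subgroup `A × ⟨i⟩ × ⟨i⟩` of `A × Q₈ × Q₈`. -/
def torus : Subgroup (A × Q8 × Q8) :=
  ((Subgroup.zpowers (a 1)).prod (Subgroup.zpowers (a 1))).comap (MonoidHom.snd A (Q8 × Q8))

variable (A) in
/-- The subgroup `{(μ, x, x)}` of `A × Q₈ × Q₈`. -/
def diagonal : Subgroup (A × Q8 × Q8) :=
  ((MonoidHom.fst Q8 Q8).eqLocus (MonoidHom.snd Q8 Q8)).comap (MonoidHom.snd A (Q8 × Q8))

variable (A) in
theorem isMulCommutative_torus : IsMulCommutative (torus A) := by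
  have hzpowers {x y : Q8} (hx : x ∈ Subgroup.zpowers (a 1)) (hy : y ∈ Subgroup.zpowers (a 1)) :
      x * y = y * x := setLike_mul_comm hx hy
  refine .of_setLike_mul_comm ?_
  rintro s ⟨hs₂, hs₃⟩ t ⟨ht₂, ht₃⟩
  exact Prod.ext (mul_comm _ _) (Prod.ext (hzpowers hs₂ ht₂) (hzpowers hs₃ ht₃))

theorem commutatorElement_prod (s t : A × Q8 × Q8) :
    ⁅s, t⁆ = (1, ⁅s.2.1, t.2.1⁆, ⁅s.2.2, t.2.2⁆) :=
  Prod.ext (Commute.all s.1 t.1).commutator_eq rfl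

variable (A) in
/-- The automorphism of `A × Q₈ × Q₈` acting componentwise by `φ₂` and `φ₃` on the two factors
`Q₈`. -/
def factorAut (φ₂ φ₃ : MulAut Q8) : MulAut (A × Q8 × Q8) :=
  (MulEquiv.refl A).prodCongr (φ₂.prodCongr φ₃)

theorem factorAut_apply (φ₂ φ₃ : MulAut Q8) (t : A × Q8 × Q8) :
    factorAut A φ₂ φ₃ t = (t.1, φ₂ t.2.1, φ₃ t.2.2) :=
  rfl

end Q8

/-- `K` is the kernel of the sign product `(ε₁, ε₂, ε₃) ↦ ε₁ε₂ε₃` on triples of signs in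
`A × Q₈ × Q₈`, where `z` plays the role of `-1` in `A`. The subgroup property of `K` forces
`z ^ 2 = 1`. -/
def IsSignKernel (z : A) (K : Subgroup (A × Q8 × Q8)) : Prop :=
  ∀ t, t ∈ K ↔ t = 1 ∨ t = (1, a 2, a 2) ∨ t = (z, 1, a 2) ∨ t = (z, a 2, 1)

namespace IsSignKernel

variable {z : A} {K : Subgroup (A × Q8 × Q8)}

theorem map_factorAut (hK : IsSignKernel z K) (φ₂ φ₃ : MulAut Q8) :
    K.map (Q8.factorAut A φ₂ φ₃).toMonoidHom = K := by
  have hfix : Set.EqOn (Q8.factorAut A φ₂ φ₃) id K := by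
    intro t ht
    rcases (hK t).mp ht with rfl | rfl | rfl | rfl <;>
      simp [Q8.factorAut_apply, Q8.mulAut_apply_a_two]
  exact SetLike.coe_injective (hfix.image_eq.trans (Set.image_id _))

variable [K.Normal]

/-- The automorphism of the quotient by `K` induced by `Q8.factorAut A φ₂ φ₃`. -/
def inducedAut (hK : IsSignKernel z K) (φ₂ φ₃ : MulAut Q8) : MulAut ((A × Q8 × Q8) ⧸ K) :=
  QuotientGroup.congr K K (Q8.factorAut A φ₂ φ₃) (hK.map_factorAut φ₂ φ₃)

theorem commute_iff_commute_of_commute_mk' (hK : IsSignKernel z K) (hz : z ≠ 1)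
    {s t : A × Q8 × Q8} (h : Commute (QuotientGroup.mk' K s) (QuotientGroup.mk' K t)) :
    Commute s.2.1 t.2.1 ↔ Commute s.2.2 t.2.2 := by
  rw [commute_mk'_iff_commutatorElement_mem, Q8.commutatorElement_prod, hK] at h
  rw [← commutatorElement_eq_one_iff_commute, ← commutatorElement_eq_one_iff_commute]
  rcases h with h | h | h | h <;> simp only [Prod.ext_iff, Prod.fst_one, Prod.snd_one] at h
  · rw [h.2.1, h.2.2]
  · rw [h.2.1, h.2.2]
  · exact absurd h.1.symm hz
  · exact absurd h.1.symm hz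

theorem isMulCommutative_map_diagonal (hK : IsSignKernel z K) :
    IsMulCommutative ((Q8.diagonal A).map (QuotientGroup.mk' K)) := by
  refine .of_setLike_mul_comm ?_
  rintro _ ⟨s, hs : s.2.1 = s.2.2, rfl⟩ _ ⟨t, ht : t.2.1 = t.2.2, rfl⟩
  refine (commute_mk'_iff_commutatorElement_mem K).mpr ?_
  rw [Q8.commutatorElement_prod, ← hs, ← ht, hK]
  by_cases h : Commute s.2.1 t.2.1
  · exact Or.inl (by rw [h.commutator_eq]; rfl)
  · exact Or.inr (Or.inl (by rw [Q8.commutatorElement_eq_a_two h]))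

theorem mk'_mem_map_diagonal (hK : IsSignKernel z K) {t : A × Q8 × Q8}
    (ht : t.2.2 = t.2.1 ∨ t.2.2 = t.2.1 * a 2) :
    QuotientGroup.mk' K t ∈ (Q8.diagonal A).map (QuotientGroup.mk' K) := by
  rcases ht with ht | ht
  · exact ⟨t, ht.symm, rfl⟩
  · refine ⟨(t.1 * z⁻¹, t.2.1, t.2.1), rfl, QuotientGroup.eq.mpr ((hK _).mpr ?_)⟩
    right; right; left
    ext <;> simp [ht]

theorem map_inducedAut_le_iff (hK : IsSignKernel z K) {φ₂ φ₃ : MulAut Q8}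
    {H T : Subgroup ((A × Q8 × Q8) ⧸ K)} :
    H.map (hK.inducedAut φ₂ φ₃).toMonoidHom ≤ T ↔
      ∀ t, QuotientGroup.mk' K t ∈ H → QuotientGroup.mk' K (t.1, φ₂ t.2.1, φ₃ t.2.2) ∈ T := by
  rw [Subgroup.map_le_iff_le_comap, SetLike.le_def, (QuotientGroup.mk'_surjective K).forall]
  rfl

variable {H : Subgroup ((A × Q8 × Q8) ⧸ K)}

theorem exists_map_inducedAut_le_torus (hK : IsSignKernel z K)
    (h₂ : ∀ s t, QuotientGroup.mk' K s ∈ H → QuotientGroup.mk' K t ∈ H → Commute s.2.1 t.2.1)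
    (h₃ : ∀ s t, QuotientGroup.mk' K s ∈ H → QuotientGroup.mk' K t ∈ H → Commute s.2.2 t.2.2) :
    ∃ φ₂ φ₃ : MulAut Q8, H.map (hK.inducedAut φ₂ φ₃).toMonoidHom ≤
      (Q8.torus A).map (QuotientGroup.mk' K) := by
  let P : Set (A × Q8 × Q8) := {t | QuotientGroup.mk' K t ∈ H}
  obtain ⟨φ₂, hφ₂⟩ := Q8.exists_mulAut_mapsTo_zpowers (S := (fun t => t.2.1) '' P) <| by
    rintro _ ⟨s, hs, rfl⟩ _ ⟨t, ht, rfl⟩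
    exact h₂ s t hs ht
  obtain ⟨φ₃, hφ₃⟩ := Q8.exists_mulAut_mapsTo_zpowers (S := (fun t => t.2.2) '' P) <| by
    rintro _ ⟨s, hs, rfl⟩ _ ⟨t, ht, rfl⟩
    exact h₃ s t hs ht
  refine ⟨φ₂, φ₃, hK.map_inducedAut_le_iff.mpr fun t ht => ?_⟩
  exact Subgroup.mem_map_of_mem _ ⟨hφ₂ ⟨t, ht, rfl⟩, hφ₃ ⟨t, ht, rfl⟩⟩

theorem exists_map_inducedAut_le_diagonal (hK : IsSignKernel z K) (hz : z ≠ 1)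
    [IsMulCommutative H] {s t : A × Q8 × Q8} (hs : QuotientGroup.mk' K s ∈ H)
    (ht : QuotientGroup.mk' K t ∈ H) (hst : ¬Commute s.2.1 t.2.1) :
    ∃ φ₂ φ₃ : MulAut Q8, H.map (hK.inducedAut φ₂ φ₃).toMonoidHom ≤
      (Q8.diagonal A).map (QuotientGroup.mk' K) := by
  have hcomm {u v : A × Q8 × Q8} (hu : QuotientGroup.mk' K u ∈ H)
      (hv : QuotientGroup.mk' K v ∈ H) : Commute u.2.1 v.2.1 ↔ Commute u.2.2 v.2.2 :=
    hK.commute_iff_commute_of_commute_mk' hz (setLike_mul_comm hu hv)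
  obtain ⟨φ₂, hs₂, ht₂⟩ := Q8.exists_mulAut_map_eq hst
  obtain ⟨φ₃, hs₃, ht₃⟩ := Q8.exists_mulAut_map_eq (mt (hcomm hs ht).mpr hst)
  refine ⟨φ₂, φ₃, hK.map_inducedAut_le_iff.mpr fun r hr => hK.mk'_mem_map_diagonal ?_⟩
  have hcomm_map {u : A × Q8 × Q8} (hu : QuotientGroup.mk' K u ∈ H) :
      Commute (φ₂ r.2.1) (φ₂ u.2.1) ↔ Commute (φ₃ r.2.2) (φ₃ u.2.2) := by
    rw [commute_map_iff φ₂.injective, commute_map_iff φ₃.injective]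
    exact hcomm hr hu
  exact Q8.eq_or_eq_mul_a_two (by simpa only [hs₂, hs₃] using hcomm_map hs)
    (by simpa only [ht₂, ht₃] using hcomm_map ht)

theorem exists_map_inducedAut_le (hK : IsSignKernel z K) (hz : z ≠ 1)
    (H : Subgroup ((A × Q8 × Q8) ⧸ K)) [IsMulCommutative H] :
    ∃ φ₂ φ₃ : MulAut Q8,
      H.map (hK.inducedAut φ₂ φ₃).toMonoidHom ≤ (Q8.torus A).map (QuotientGroup.mk' K) ∨
        H.map (hK.inducedAut φ₂ φ₃).toMonoidHom ≤ (Q8.diagonal A).map (QuotientGroup.mk' K) := by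
  by_cases h₂ : ∀ s t, QuotientGroup.mk' K s ∈ H → QuotientGroup.mk' K t ∈ H →
      Commute s.2.1 t.2.1
  · obtain ⟨φ₂, φ₃, hle⟩ := hK.exists_map_inducedAut_le_torus h₂ fun s t hs ht =>
      (hK.commute_iff_commute_of_commute_mk' hz (setLike_mul_comm hs ht)).mp (h₂ s t hs ht)
    exact ⟨φ₂, φ₃, Or.inl hle⟩
  · push Not at h₂
    obtain ⟨s, t, hs, ht, hst⟩ := h₂
    obtain ⟨φ₂, φ₃, hle⟩ := hK.exists_map_inducedAut_le_diagonal hz hs ht hst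
    exact ⟨φ₂, φ₃, Or.inr hle⟩

end IsSignKernel

theorem stmt_5_general {z : A} (hz : z ≠ 1) {K : Subgroup (A × Q8 × Q8)} [K.Normal]
    (hK : IsSignKernel z K) {H : Subgroup ((A × Q8 × Q8) ⧸ K)} (hH : IsMaximalAbelian H) :
    ∃ (φ₂ φ₃ : MulAut Q8) (ψ : MulAut ((A × Q8 × Q8) ⧸ K)),
      (∀ t, ψ (QuotientGroup.mk' K t) = QuotientGroup.mk' K (t.1, φ₂ t.2.1, φ₃ t.2.2)) ∧
      (H.map ψ.toMonoidHom = (Q8.torus A).map (QuotientGroup.mk' K) ∨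
        H.map ψ.toMonoidHom = (Q8.diagonal A).map (QuotientGroup.mk' K)) := by
  have := hH.1
  have := Q8.isMulCommutative_torus A
  have := hK.isMulCommutative_map_diagonal
  obtain ⟨φ₂, φ₃, hle⟩ := hK.exists_map_inducedAut_le hz H
  exact ⟨φ₂, φ₃, hK.inducedAut φ₂ φ₃, fun _ => rfl,
    hle.imp (hH.map_mulEquiv _).eq_of_le (hH.map_mulEquiv _).eq_of_le⟩

end CentralProduct

/-- any maximal abelian subgroup of `G = (F^× × Q₈ × Q₈)/K` can be
moved, by an automorphism of `G` lying in the subgroup of `Aut G` generated by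
the automorphisms induced by pairs of automorphisms of `Q₈` acting componentwise
on the two `Q₈` factors, onto the image of `F^× × ⟨i⟩ × ⟨i⟩` or onto the image of
`{(μ,x,x) : μ ∈ F^×, x ∈ Q₈}`.  Here `Q₈ = QuaternionGroup 2`,
`i = QuaternionGroup.a 1`, `-1 = QuaternionGroup.a 2`, and
`K = {(1,1,1), (1,-1,-1), (-1,1,-1), (-1,-1,1)}`. -/
theorem stmt_5 {F : Type*} [Field F] [IsAlgClosed F] [CharZero F]
    (K : Subgroup (Fˣ × QuaternionGroup 2 × QuaternionGroup 2)) [K.Normal]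
    (hK : ∀ t, t ∈ K ↔
      (t = 1 ∨ t = (1, QuaternionGroup.a 2, QuaternionGroup.a 2) ∨
       t = (-1, 1, QuaternionGroup.a 2) ∨ t = (-1, QuaternionGroup.a 2, 1)))
    (H : Subgroup ((Fˣ × QuaternionGroup 2 × QuaternionGroup 2) ⧸ K))
    (hH : IsMaximalAbelian H) :
    ∃ ψ : MulAut ((Fˣ × QuaternionGroup 2 × QuaternionGroup 2) ⧸ K),
      ψ ∈ Subgroup.closure
        {ψ' : MulAut ((Fˣ × QuaternionGroup 2 × QuaternionGroup 2) ⧸ K) |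
          ∃ φ₂ φ₃ : MulAut (QuaternionGroup 2),
            ∀ t, ψ' (QuotientGroup.mk' K t) =
              QuotientGroup.mk' K (t.1, φ₂ t.2.1, φ₃ t.2.2)} ∧
      ((Subgroup.map ψ.toMonoidHom H :
          Set ((Fˣ × QuaternionGroup 2 × QuaternionGroup 2) ⧸ K)) =
        (QuotientGroup.mk' K) ''
          {t | t.2.1 ∈ Subgroup.zpowers (QuaternionGroup.a 1) ∧
               t.2.2 ∈ Subgroup.zpowers (QuaternionGroup.a 1)} ∨
       (Subgroup.map ψ.toMonoidHom H :
          Set ((Fˣ × QuaternionGroup 2 × QuaternionGroup 2) ⧸ K)) =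
        (QuotientGroup.mk' K) '' {t | t.2.1 = t.2.2}) := by
  obtain ⟨φ₂, φ₃, ψ, hψ, hmap⟩ := stmt_5_general (by simp [Units.ext_iff, neg_eq_self]) hK hH
  exact ⟨ψ, Subgroup.subset_closure ⟨φ₂, φ₃, hψ⟩,
    hmap.imp (congrArg SetLike.coe) (congrArg SetLike.coe)⟩
end

section
/- Let F be an algebraically closed field of characteristic 0 and fix i ∈ F with i² = −1. If A and B are matrices in SL₂(F) satisfying A⁴ = I, B⁴ = I, and AB = −BA, then there exists P ∈ SL₂(F) such that P A P⁻¹ = [[i, 0], [0, −i]] and P B P⁻¹ = [[0, −1], [1, 0]]. -/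
/-!
Anticommuting forces `A` and `B` to be traceless; having determinant `1`, both then have
characteristic polynomial `X² + 1`. Take an eigenvector `v` of `A` for `i`. Anticommutation makes
`B v` an eigenvector of `A` for `-i`, and `B (B v) = -v`, so in the basis `(v, B v)` the two
matrices are the desired ones. Replacing `v` by `c v` multiplies the determinant of this basis by
`c²`, so a square root normalizes it to `1`.
-/

open Matrix Module.End Polynomial

theorem mul_pair_transpose_eq_pair_transpose_mul {n R : Type*} [Fintype n] [CommRing R]
    {A : Matrix n n R} {v w : n → R} {a b c d : R}
    (hv : A *ᵥ v = a • v + c • w) (hw : A *ᵥ w = b • v + d • w) :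
    A * (of ![v, w])ᵀ = (of ![v, w])ᵀ * !![a, b; c, d] := by
  ext r j
  fin_cases j
  · simpa [Matrix.mul_apply, mulVec, dotProduct, mul_comm] using congrFun hv r
  · simpa [Matrix.mul_apply, mulVec, dotProduct, mul_comm] using congrFun hw r

section CommRing

variable {n R : Type*} [Fintype n] [DecidableEq n] [CommRing R]

theorem trace_eq_zero_of_mul_eq_neg_mul [NoZeroDivisors R] [NeZero (2 : R)] {A B : Matrix n n R}
    (hB : IsUnit B) (hAB : A * B = -(B * A)) : A.trace = 0 := by
  obtain ⟨U, rfl⟩ := hB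
  have trace_eq_neg : A.trace = -A.trace := calc
    A.trace = ((A * U.val) * U⁻¹.val).trace := by rw [Units.mul_inv_cancel_right]
    _ = -(U.val * A * U⁻¹.val).trace := by rw [hAB, neg_mul, trace_neg]
    _ = -A.trace := by rw [trace_units_conj]
  have two_mul_trace : 2 * A.trace = 0 := by linear_combination trace_eq_neg
  exact (mul_eq_zero.mp two_mul_trace).resolve_left two_ne_zero

theorem charpoly_eq_X_sq_add_one_of_mul_eq_neg_mul [IsDomain R] [NeZero (2 : R)]
    {A B : Matrix (Fin 2) (Fin 2) R} (hA : A.det = 1) (hB : IsUnit B)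
    (hAB : A * B = -(B * A)) : A.charpoly = X ^ 2 + 1 := by
  simp [charpoly_fin_two, trace_eq_zero_of_mul_eq_neg_mul hB hAB, hA]

theorem sq_eq_neg_one_of_charpoly_eq_X_sq_add_one {A : Matrix n n R}
    (hA : A.charpoly = X ^ 2 + 1) : A ^ 2 = -1 := by
  have cayley_hamilton := aeval_self_charpoly A
  rw [hA, map_add, map_pow, aeval_X, map_one] at cayley_hamilton
  exact eq_neg_of_add_eq_zero_left cayley_hamilton

theorem exists_hasEigenvector_of_isRoot_charpoly [IsDomain R] {A : Matrix n n R} {μ : R}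
    (hμ : A.charpoly.IsRoot μ) : ∃ v, HasEigenvector A.toLin' μ v := by
  rw [← charpoly_toLin', ← hasEigenvalue_iff_isRoot_charpoly] at hμ
  exact hμ.exists_hasEigenvector

theorem hasEigenvector_neg_of_mul_eq_neg_mul {M : Type*} [AddCommGroup M] [Module R M]
    {f g : Module.End R M} {μ : R} {v : M} (hfg : f * g = -(g * f))
    (hv : f.HasEigenvector μ v) (hgv : g v ≠ 0) : f.HasEigenvector (-μ) (g v) := by
  refine ⟨mem_eigenspace_iff.mpr ?_, hgv⟩
  calc f (g v) = -g (f v) := LinearMap.congr_fun hfg v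
    _ = -μ • g v := by rw [hv.apply_eq_smul, map_smul, neg_smul]

theorem exists_specialLinearGroup_conj_eq {Q : Matrix n n R} {c : R}
    (hc : c ^ Fintype.card n * Q.det = 1) :
    ∃ P : SpecialLinearGroup n R, ∀ A D : Matrix n n R, A * Q = Q * D →
      (P : Matrix n n R) * A * (P⁻¹ : SpecialLinearGroup n R) = D := by
  obtain ⟨S, hS⟩ : ∃ S : SpecialLinearGroup n R, (S : Matrix n n R) = c • Q :=
    ⟨⟨c • Q, by rw [det_smul, hc]⟩, rfl⟩
  refine ⟨S⁻¹, fun A D hAQ => ?_⟩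
  have hAS : A * (S : Matrix n n R) = S * D := by rw [hS, Matrix.mul_smul, hAQ, smul_mul]
  calc ((S⁻¹ : SpecialLinearGroup n R) : Matrix n n R) * A * (S⁻¹⁻¹ : SpecialLinearGroup n R)
    _ = (S⁻¹ : SpecialLinearGroup n R) * (A * (S : Matrix n n R)) := by
      rw [inv_inv, Matrix.mul_assoc]
    _ = (S⁻¹ * S : SpecialLinearGroup n R) * D := by
      rw [hAS, ← Matrix.mul_assoc, Matrix.SpecialLinearGroup.coe_mul]
    _ = D := by rw [inv_mul_cancel, Matrix.SpecialLinearGroup.coe_one, Matrix.one_mul]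

end CommRing

section Field

variable {F : Type*} [Field F]

theorem isUnit_det_of_hasEigenvector_col {n : Type*} [Fintype n] [DecidableEq n]
    {A Q : Matrix n n F} {μ : n → F}
    (hμ : Function.Injective μ) (hQ : ∀ j, HasEigenvector A.toLin' (μ j) (Q.col j)) :
    IsUnit Q.det :=
  (isUnit_iff_isUnit_det Q).mp <| linearIndependent_cols_iff_isUnit.mp <|
    eigenvectors_linearIndependent' A.toLin' μ hμ Q.col hQ

theorem isUnit_det_and_mul_eq_mul_of_hasEigenvector {A B : Matrix (Fin 2) (Fin 2) F} {i : F}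
    {v : Fin 2 → F} (hi : i ≠ -i) (hAB : A * B = -(B * A)) (hB : B ^ 2 = -1)
    (hv : HasEigenvector A.toLin' i v) :
    IsUnit (of ![v, B *ᵥ v])ᵀ.det ∧
      A * (of ![v, B *ᵥ v])ᵀ = (of ![v, B *ᵥ v])ᵀ * !![i, 0; 0, -i] ∧
      B * (of ![v, B *ᵥ v])ᵀ = (of ![v, B *ᵥ v])ᵀ * !![0, -1; 1, 0] := by
  have hBBv : B *ᵥ (B *ᵥ v) = -v := by rw [mulVec_mulVec, ← sq, hB, neg_mulVec, one_mulVec]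
  have hBv_ne : B *ᵥ v ≠ 0 := fun h => hv.2 (by simpa [h] using hBBv.symm)
  have hAB_lin : A.toLin' * B.toLin' = -(B.toLin' * A.toLin') := by
    rw [mul_eq_comp, ← toLin'_mul, hAB, map_neg, toLin'_mul, mul_eq_comp]
  have hBv : HasEigenvector A.toLin' (-i) (B *ᵥ v) :=
    hasEigenvector_neg_of_mul_eq_neg_mul hAB_lin hv hBv_ne
  have hμ : Function.Injective ![i, -i] := by
    simpa [Function.Injective, Fin.forall_fin_two, eq_comm] using hi
  refine ⟨isUnit_det_of_hasEigenvector_col hμ (Fin.forall_fin_two.mpr ⟨hv, hBv⟩), ?_, ?_⟩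
  · exact mul_pair_transpose_eq_pair_transpose_mul
      (by simpa using hv.apply_eq_smul) (by simpa using hBv.apply_eq_smul)
  · exact mul_pair_transpose_eq_pair_transpose_mul (by simp) (by simpa using hBBv)

theorem exists_isUnit_det_and_mul_eq_mul_of_mul_eq_neg_mul [NeZero (2 : F)] {i : F}
    (hi : i ^ 2 = -1) {A B : Matrix (Fin 2) (Fin 2) F} (hA : A.det = 1) (hB : B.det = 1)
    (hAB : A * B = -(B * A)) :
    ∃ Q : Matrix (Fin 2) (Fin 2) F, IsUnit Q.det ∧
      A * Q = Q * !![i, 0; 0, -i] ∧ B * Q = Q * !![0, -1; 1, 0] := by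
  have hA_unit : IsUnit A := (isUnit_iff_isUnit_det A).mpr (hA ▸ isUnit_one)
  have hB_unit : IsUnit B := (isUnit_iff_isUnit_det B).mpr (hB ▸ isUnit_one)
  have hA_charpoly : A.charpoly = X ^ 2 + 1 :=
    charpoly_eq_X_sq_add_one_of_mul_eq_neg_mul hA hB_unit hAB
  have hB_charpoly : B.charpoly = X ^ 2 + 1 :=
    charpoly_eq_X_sq_add_one_of_mul_eq_neg_mul hB hA_unit (by rw [hAB, neg_neg])
  obtain ⟨v, hv⟩ : ∃ v, HasEigenvector A.toLin' i v :=
    exists_hasEigenvector_of_isRoot_charpoly (by simp [hA_charpoly, hi])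
  have hi_ne : i ≠ -i := fun h => by
    have two_eq_zero : (2 : F) = 0 := by linear_combination 2 * hi - i * h
    exact two_ne_zero two_eq_zero
  exact ⟨_, isUnit_det_and_mul_eq_mul_of_hasEigenvector hi_ne hAB
    (sq_eq_neg_one_of_charpoly_eq_X_sq_add_one hB_charpoly) hv⟩

end Field

theorem stmt_8_general {F : Type*} [Field F] [NeZero (2 : F)] (hF : ∀ x : F, IsSquare x)
    (i : F) (hi : i ^ 2 = -1)
    (A B : Matrix.SpecialLinearGroup (Fin 2) F)
    (hAB : ((A * B : Matrix.SpecialLinearGroup (Fin 2) F) : Matrix (Fin 2) (Fin 2) F) =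
      -((B * A : Matrix.SpecialLinearGroup (Fin 2) F) : Matrix (Fin 2) (Fin 2) F)) :
    ∃ P : Matrix.SpecialLinearGroup (Fin 2) F,
      ((P * A * P⁻¹ : Matrix.SpecialLinearGroup (Fin 2) F) : Matrix (Fin 2) (Fin 2) F) =
        !![i, 0; 0, -i] ∧
      ((P * B * P⁻¹ : Matrix.SpecialLinearGroup (Fin 2) F) : Matrix (Fin 2) (Fin 2) F) =
        !![0, -1; 1, 0] := by
  obtain ⟨Q, hQ, hAQ, hBQ⟩ :=
    exists_isUnit_det_and_mul_eq_mul_of_mul_eq_neg_mul hi A.det_coe B.det_coe hAB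
  obtain ⟨c, hc⟩ := hF Q.det⁻¹
  have hc_sq : c ^ Fintype.card (Fin 2) * Q.det = 1 := by
    rw [Fintype.card_fin, sq, ← hc, inv_mul_cancel₀ hQ.ne_zero]
  obtain ⟨P, hP⟩ := exists_specialLinearGroup_conj_eq hc_sq
  exact ⟨P, hP _ _ hAQ, hP _ _ hBQ⟩

/-- if `A, B ∈ SL₂(F)` satisfy `A⁴ = B⁴ = I` and `AB = -BA`, then they
can be simultaneously conjugated inside `SL₂(F)` to `[[i,0],[0,-i]]` and
`[[0,-1],[1,0]]`, where `i² = -1`. -/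
theorem stmt_8 {F : Type*} [Field F] [IsAlgClosed F] [CharZero F]
    (i : F) (hi : i ^ 2 = -1)
    (A B : Matrix.SpecialLinearGroup (Fin 2) F)
    (hA : A ^ 4 = 1) (hB : B ^ 4 = 1)
    (hAB : ((A * B : Matrix.SpecialLinearGroup (Fin 2) F) : Matrix (Fin 2) (Fin 2) F) =
      -((B * A : Matrix.SpecialLinearGroup (Fin 2) F) : Matrix (Fin 2) (Fin 2) F)) :
    ∃ P : Matrix.SpecialLinearGroup (Fin 2) F,
      ((P * A * P⁻¹ : Matrix.SpecialLinearGroup (Fin 2) F) : Matrix (Fin 2) (Fin 2) F) =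
        !![i, 0; 0, -i] ∧
      ((P * B * P⁻¹ : Matrix.SpecialLinearGroup (Fin 2) F) : Matrix (Fin 2) (Fin 2) F) =
        !![0, -1; 1, 0] :=
  stmt_8_general IsAlgClosed.exists_eq_mul_self i hi A B hAB
end

section
/- Let F be a field of characteristic 0 and let (U,Q) be a quadratic space with basis u₁, v₁, …, u_m, v_m, w₁, …, w_{2l+1} (so dim U = 2m + 2l + 1) such that Q(u_i) = Q(v_i) = 0 and b_Q(u_i, v_i) = 1 for 1 ≤ i ≤ m, Q(w_j) = 1 for 1 ≤ j ≤ 2l+1, and any two distinct basis vectors other than the pairs {u_i, v_i} are orthogonal for the polar form b_Q. In the Clifford algebra Cl(U,Q), let z = (ι(u₁)ι(v₁) − ι(v₁)ι(u₁)) ⋯ (ι(u_m)ι(v_m) − ι(v_m)ι(u_m)) · ι(w₁) ⋯ ι(w_{2l+1}). Then z·x = x·z for every x ∈ Cl(U,Q), and z² = (−1)^l · 1. -/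
/-!
Each commutator `[ι x, ι y]` anticommutes with `ι x` and `ι y`, and commutes with every vector
orthogonal to both. Hence the product `C` of the commutators anticommutes with all `ι uᵢ`, `ι vᵢ`
and commutes with all `ι wⱼ`, while the product `W` of an odd number of pairwise anticommuting
`ι wⱼ` does exactly the same. The signs cancel in `z = C * W`, which is therefore central. The
squares are `[ι x, ι y]² = b(x, y)² - 4 Q(x) Q(y)` and `W² = (-1)^(n choose 2) ∏ Q(wⱼ)`, the sign
counting the swaps needed to bring equal factors of `W * W` together.
-/

open CliffordAlgebra QuadraticMap

section ProdOfFn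

variable {S A : Type*} [CommMonoid S] [Monoid A] [MulAction S A] [IsScalarTower S A A]
  [SMulCommClass S A A] {n : ℕ} {f : Fin n → A} {x : A}

theorem semiconjBy_prod_ofFn {e : Fin n → S} (h : ∀ i, SemiconjBy (f i) x (e i • x)) :
    SemiconjBy (List.ofFn f).prod x ((∏ i, e i) • x) := by
  induction n with
  | zero => simp
  | succ n ih =>
    have htail := ih fun i => h i.succ
    rw [List.ofFn_succ, List.prod_cons, Fin.prod_univ_succ]
    refine SemiconjBy.mul_left ?_ htail
    rw [SemiconjBy, mul_smul_comm, (h 0).eq, smul_mul_assoc, smul_mul_assoc, smul_smul, mul_comm]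

theorem semiconjBy_prod_ofFn_of_forall_ne {a b : S} (k : Fin n)
    (hk : SemiconjBy (f k) x (a • x)) (h : ∀ i ≠ k, SemiconjBy (f i) x (b • x)) :
    SemiconjBy (List.ofFn f).prod x ((a * b ^ (n - 1)) • x) := by
  have hprod : ∏ i, Function.update (fun _ => b) k a i = a * b ^ (n - 1) := by
    simp [Finset.prod_update_of_mem, Finset.card_sdiff]
  rw [← hprod]
  refine semiconjBy_prod_ofFn fun i => ?_
  obtain rfl | hik := eq_or_ne i k
  · simpa using hk
  · simpa [hik] using h i hik

end ProdOfFn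

theorem prod_ofFn_sq {R A : Type*} [CommSemiring R] [Semiring A] [Algebra R A] {n : ℕ}
    {f : Fin n → A} {e : R} {q : Fin n → R}
    (hcomm : ∀ i j, j < i → SemiconjBy (f i) (f j) (e • f j))
    (hsq : ∀ i, f i ^ 2 = algebraMap R A (q i)) :
    (List.ofFn f).prod ^ 2 = algebraMap R A (e ^ n.choose 2 * ∏ i, q i) := by
  induction n with
  | zero => simp
  | succ n ih =>
    have htail := ih (fun i j hij => hcomm _ _ (Fin.succ_lt_succ_iff.2 hij)) fun i => hsq i.succ
    have hswap : SemiconjBy (List.ofFn fun i : Fin n => f i.succ).prod (f 0) (e ^ n • f 0) := by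
      simpa only [Finset.prod_const, Finset.card_univ, Fintype.card_fin] using
        semiconjBy_prod_ofFn fun i : Fin n => hcomm i.succ 0 i.succ_pos
    rw [List.ofFn_succ, List.prod_cons]
    set P := (List.ofFn fun i : Fin n => f i.succ).prod
    calc (f 0 * P) ^ 2 = f 0 * (P * f 0) * P := by simp only [pow_two, mul_assoc]
      _ = e ^ n • (f 0 ^ 2 * P ^ 2) := by
        simp only [hswap.eq, smul_mul_assoc, mul_smul_comm, pow_two, mul_assoc]
      _ = algebraMap R A (e ^ (n + 1).choose 2 * ∏ i, q i) := by
        rw [hsq, htail, ← map_mul, Algebra.smul_def, ← map_mul, Fin.prod_univ_succ,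
          Nat.choose_succ_succ', Nat.choose_one_right, pow_add]
        ring_nf

theorem neg_one_pow_choose_two_two_mul_add_one {R : Type*} [Monoid R] [HasDistribNeg R] (l : ℕ) :
    (-1 : R) ^ (2 * l + 1).choose 2 = (-1) ^ l := by
  have hchoose : (2 * l + 1).choose 2 = (2 * l + 1) * l := by
    rw [Nat.choose_two_right, Nat.add_sub_cancel, mul_left_comm, Nat.mul_div_cancel_left _ two_pos]
  rw [hchoose, pow_mul, (odd_two_mul_add_one l).neg_one_pow]

section Lie

variable {A : Type*} [Ring A] {a b x : A}

theorem semiconjBy_lie_neg_of_commute_sq (h : Commute (a ^ 2) b) : SemiconjBy ⁅a, b⁆ a (-a) := by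
  have hab : a * (a * b) = b * (a * a) := by simpa only [pow_two, mul_assoc] using h.eq
  rw [SemiconjBy, Ring.lie_def, sub_mul, neg_mul, mul_sub, hab]
  noncomm_ring

theorem commute_lie_of_semiconjBy_neg (ha : SemiconjBy a x (-x)) (hb : SemiconjBy b x (-x)) :
    Commute ⁅a, b⁆ x := by
  have ha' : SemiconjBy a (-x) x := by simpa only [neg_neg] using ha.neg_right
  have hb' : SemiconjBy b (-x) x := by simpa only [neg_neg] using hb.neg_right
  exact (ha'.mul_left hb).sub_left (hb'.mul_left ha)

end Lie

section Clifford

variable {R M : Type*} [CommRing R] [AddCommGroup M] [Module R M] {Q : QuadraticForm R M}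

theorem commute_of_span_eq_top {s : Set M} (hs : Submodule.span R s = ⊤) {z : CliffordAlgebra Q}
    (hz : ∀ a ∈ s, Commute z (ι Q a)) (x : CliffordAlgebra Q) : Commute z x := by
  have hι : LinearMap.mulLeft R z ∘ₗ ι Q = LinearMap.mulRight R z ∘ₗ ι Q :=
    LinearMap.ext_on hs fun a ha => hz a ha
  induction x using CliffordAlgebra.induction with
  | algebraMap r => exact (Algebra.commutes r z).symm
  | ι a => exact LinearMap.congr_fun hι a
  | mul a b ha hb => exact ha.mul_right hb
  | add a b ha hb => exact ha.add_right hb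

theorem ι_semiconjBy_neg {x y : M} (h : polar Q x y = 0) :
    SemiconjBy (ι Q x) (ι Q y) (-ι Q y) := by
  rw [SemiconjBy, ι_mul_ι_comm, h, map_zero, zero_sub, neg_mul]

theorem lie_ι_semiconjBy_neg_left (x y : M) : SemiconjBy ⁅ι Q x, ι Q y⁆ (ι Q x) (-ι Q x) := by
  apply semiconjBy_lie_neg_of_commute_sq
  rw [pow_two, ι_sq_scalar]
  exact Algebra.commutes _ _

theorem lie_ι_semiconjBy_neg_right (x y : M) : SemiconjBy ⁅ι Q x, ι Q y⁆ (ι Q y) (-ι Q y) := by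
  rw [Ring.lie_def, ← neg_sub]
  exact (lie_ι_semiconjBy_neg_left y x).neg_left

theorem commute_lie_ι {x y a : M} (hx : polar Q x a = 0) (hy : polar Q y a = 0) :
    Commute ⁅ι Q x, ι Q y⁆ (ι Q a) :=
  commute_lie_of_semiconjBy_neg (ι_semiconjBy_neg hx) (ι_semiconjBy_neg hy)

theorem ι_mul_ι_mul_swap (x y : M) :
    ι Q x * ι Q y * (ι Q y * ι Q x) = algebraMap R _ (Q x * Q y) := by
  rw [mul_assoc, ← mul_assoc (ι Q y), ι_sq_scalar, Algebra.commutes, ← mul_assoc, ι_sq_scalar,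
    map_mul]

theorem lie_ι_sq (x y : M) :
    ⁅ι Q x, ι Q y⁆ ^ 2 = algebraMap R _ (polar Q x y ^ 2 - 4 * (Q x * Q y)) := by
  calc ⁅ι Q x, ι Q y⁆ ^ 2
      = (ι Q x * ι Q y + ι Q y * ι Q x) ^ 2 -
          2 * (ι Q x * ι Q y * (ι Q y * ι Q x) + ι Q y * ι Q x * (ι Q x * ι Q y)) := by
        rw [Ring.lie_def]; noncomm_ring
    _ = algebraMap R _ (polar Q x y ^ 2 - 4 * (Q x * Q y)) := by
        rw [ι_mul_ι_add_swap, ι_mul_ι_mul_swap, ι_mul_ι_mul_swap, mul_comm (Q y), map_sub, map_pow,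
          map_mul _ 4, map_ofNat]
        noncomm_ring

variable (Q) in
/-- The product `[ι u₁, ι v₁] ⋯ [ι uₘ, ι vₘ]` of the commutators attached to the planes spanned by
`uᵢ` and `vᵢ`, the first factor of the central element `z`. -/
def lieProd {m : ℕ} (u v : Fin m → M) : CliffordAlgebra Q :=
  (List.ofFn fun i => ⁅ι Q (u i), ι Q (v i)⁆).prod

variable (Q) in
/-- The product `ι w₁ ⋯ ι wₙ`, the second factor of the central element `z`. -/
def ιProd {n : ℕ} (w : Fin n → M) : CliffordAlgebra Q :=
  (List.ofFn fun j => ι Q (w j)).prod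

section LieProd

variable {m : ℕ} {u v : Fin m → M}

theorem commute_lieProd_ι {a : M} (hu : ∀ i, polar Q (u i) a = 0) (hv : ∀ i, polar Q (v i) a = 0) :
    Commute (lieProd Q u v) (ι Q a) :=
  Commute.list_prod_left _ _ <|
    (List.forall_mem_ofFn_iff (P := (Commute · _))).2 fun i => commute_lie_ι (hu i) (hv i)

theorem lieProd_semiconjBy_neg_of_forall_ne {a : M} (k : Fin m)
    (hk : SemiconjBy ⁅ι Q (u k), ι Q (v k)⁆ (ι Q a) (-ι Q a))
    (hu : ∀ i ≠ k, polar Q (u i) a = 0) (hv : ∀ i ≠ k, polar Q (v i) a = 0) :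
    SemiconjBy (lieProd Q u v) (ι Q a) (-ι Q a) := by
  have hne (i : Fin m) (hik : i ≠ k) :
      SemiconjBy ⁅ι Q (u i), ι Q (v i)⁆ (ι Q a) ((1 : R) • ι Q a) := by
    rw [one_smul]
    exact commute_lie_ι (hu i hik) (hv i hik)
  simpa only [lieProd, one_pow, mul_one, neg_one_smul] using
    semiconjBy_prod_ofFn_of_forall_ne (a := (-1 : R)) k (by simpa only [neg_one_smul] using hk) hne

theorem lieProd_sq (huu : ∀ i j, i ≠ j → polar Q (u i) (u j) = 0)
    (hvv : ∀ i j, i ≠ j → polar Q (v i) (v j) = 0)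
    (huv : ∀ i j, i ≠ j → polar Q (u i) (v j) = 0) :
    lieProd Q u v ^ 2 =
      algebraMap R _ (∏ i, (polar Q (u i) (v i) ^ 2 - 4 * (Q (u i) * Q (v i)))) := by
  have hcomm (i j : Fin m) (hij : i ≠ j) :
      Commute ⁅ι Q (u i), ι Q (v i)⁆ ⁅ι Q (u j), ι Q (v j)⁆ := by
    have hu := commute_lie_ι (huu i j hij) ((polar_comm Q _ _).trans (huv j i hij.symm))
    have hv := commute_lie_ι (huv i j hij) (hvv i j hij)
    exact (hu.mul_right hv).sub_right (hv.mul_right hu)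
  simpa only [lieProd, one_pow, one_mul] using prod_ofFn_sq (e := (1 : R))
    (fun i j hij => by rw [one_smul]; exact hcomm i j hij.ne') fun i => lie_ι_sq (u i) (v i)

end LieProd

section ιProd

variable {n : ℕ} {w : Fin n → M}

theorem ιProd_semiconjBy_ι_of_forall_polar_eq_zero {a : M} (h : ∀ j, polar Q (w j) a = 0) :
    SemiconjBy (ιProd Q w) (ι Q a) ((-1 : R) ^ n • ι Q a) := by
  simpa only [ιProd, Finset.prod_const, Finset.card_univ, Fintype.card_fin] using
    semiconjBy_prod_ofFn (e := fun _ => (-1 : R)) fun j => by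
      simpa only [neg_one_smul] using ι_semiconjBy_neg (h j)

theorem ιProd_semiconjBy_ι_apply (h : ∀ i j, i ≠ j → polar Q (w i) (w j) = 0) (k : Fin n) :
    SemiconjBy (ιProd Q w) (ι Q (w k)) ((-1 : R) ^ (n - 1) • ι Q (w k)) := by
  have hne (i : Fin n) (hik : i ≠ k) :
      SemiconjBy (ι Q (w i)) (ι Q (w k)) ((-1 : R) • ι Q (w k)) := by
    simpa only [neg_one_smul] using ι_semiconjBy_neg (h i k hik)
  simpa only [ιProd, one_mul] using semiconjBy_prod_ofFn_of_forall_ne (a := (1 : R)) k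
    (by rw [one_smul]; exact Commute.refl _) hne

theorem ιProd_sq (h : ∀ i j, i ≠ j → polar Q (w i) (w j) = 0) :
    ιProd Q w ^ 2 = algebraMap R _ ((-1) ^ n.choose 2 * ∏ j, Q (w j)) :=
  prod_ofFn_sq
    (fun i j hij => by simpa only [neg_one_smul] using ι_semiconjBy_neg (h i j hij.ne'))
    fun j => by rw [pow_two, ι_sq_scalar]

end ιProd

theorem commute_lieProd_ιProd {m n : ℕ} {u v : Fin m → M} {w : Fin n → M}
    (huw : ∀ i j, polar Q (u i) (w j) = 0) (hvw : ∀ i j, polar Q (v i) (w j) = 0) :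
    Commute (lieProd Q u v) (ιProd Q w) :=
  Commute.list_prod_right _ _ <| (List.forall_mem_ofFn_iff (P := Commute _)).2 fun j =>
    commute_lieProd_ι (fun i => huw i j) fun i => hvw i j

variable (Q) in
/-- The planes spanned by `uᵢ` and `vᵢ` and the lines spanned by `wⱼ` are pairwise orthogonal for
the polar form of `Q`. -/
structure IsOrthoPlanesLines {m n : ℕ} (u v : Fin m → M) (w : Fin n → M) : Prop where
  uu : ∀ i j, i ≠ j → polar Q (u i) (u j) = 0
  vv : ∀ i j, i ≠ j → polar Q (v i) (v j) = 0
  uv : ∀ i j, i ≠ j → polar Q (u i) (v j) = 0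
  uw : ∀ i j, polar Q (u i) (w j) = 0
  vw : ∀ i j, polar Q (v i) (w j) = 0
  ww : ∀ i j, i ≠ j → polar Q (w i) (w j) = 0

theorem lieProd_mul_ιProd_sq {m n : ℕ} {u v : Fin m → M} {w : Fin n → M}
    (hQ : IsOrthoPlanesLines Q u v w) :
    (lieProd Q u v * ιProd Q w) ^ 2 = algebraMap R _ ((-1) ^ n.choose 2 *
      (∏ i, (polar Q (u i) (v i) ^ 2 - 4 * (Q (u i) * Q (v i)))) * ∏ j, Q (w j)) := by
  rw [(commute_lieProd_ιProd hQ.uw hQ.vw).mul_pow, lieProd_sq hQ.uu hQ.vv hQ.uv, ιProd_sq hQ.ww,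
    ← map_mul, mul_left_comm, mul_assoc]

theorem commute_lieProd_mul_ιProd {m n : ℕ} {u v : Fin m → M} {w : Fin n → M} (hn : Odd n)
    (hspan : Submodule.span R (Set.range (Sum.elim u (Sum.elim v w))) = ⊤)
    (hQ : IsOrthoPlanesLines Q u v w) (x : CliffordAlgebra Q) :
    Commute (lieProd Q u v * ιProd Q w) x := by
  have commute_of_anticommute {a : M}
      (hC : SemiconjBy (lieProd Q u v) (ι Q a) (-ι Q a)) (hW : ∀ j, polar Q a (w j) = 0) :
      Commute (lieProd Q u v * ιProd Q w) (ι Q a) := by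
    have hW' : SemiconjBy (ιProd Q w) (ι Q a) (-ι Q a) := by
      simpa only [hn.neg_one_pow, neg_one_smul] using
        ιProd_semiconjBy_ι_of_forall_polar_eq_zero fun j => (polar_comm Q _ _).trans (hW j)
    exact SemiconjBy.mul_left (by simpa only [neg_neg] using hC.neg_right) hW'
  refine commute_of_span_eq_top hspan ?_ x
  rintro _ ⟨i | i | j, rfl⟩
  · have hC : SemiconjBy (lieProd Q u v) (ι Q (u i)) (-ι Q (u i)) :=
      lieProd_semiconjBy_neg_of_forall_ne i (lie_ι_semiconjBy_neg_left _ _)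
        (fun k hk => hQ.uu k i hk) fun k hk => (polar_comm Q _ _).trans (hQ.uv i k hk.symm)
    exact commute_of_anticommute hC (hQ.uw i)
  · have hC : SemiconjBy (lieProd Q u v) (ι Q (v i)) (-ι Q (v i)) :=
      lieProd_semiconjBy_neg_of_forall_ne i (lie_ι_semiconjBy_neg_right _ _)
        (fun k hk => hQ.uv k i hk) fun k hk => hQ.vv k i hk
    exact commute_of_anticommute hC (hQ.vw i)
  · have hW : Commute (ιProd Q w) (ι Q (w j)) := by
      have hsmul := ιProd_semiconjBy_ι_apply hQ.ww j
      rwa [(Nat.Odd.sub_odd hn odd_one).neg_one_pow, one_smul] at hsmul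
    exact (commute_lieProd_ι (fun i => hQ.uw i j) fun i => hQ.vw i j).mul_left hW

end Clifford

theorem stmt_11_general {R M : Type*} [CommRing R] [AddCommGroup M] [Module R M]
    {Q : QuadraticForm R M} {m l : ℕ} {u v : Fin m → M} {w : Fin (2 * l + 1) → M}
    (hspan : Submodule.span R (Set.range (Sum.elim u (Sum.elim v w))) = ⊤)
    (hQ : IsOrthoPlanesLines Q u v w) :
    (∀ x, Commute (lieProd Q u v * ιProd Q w) x) ∧
    (lieProd Q u v * ιProd Q w) ^ 2 = algebraMap R _ ((-1) ^ l *
      (∏ i, (polar Q (u i) (v i) ^ 2 - 4 * (Q (u i) * Q (v i)))) * ∏ j, Q (w j)) := by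
  refine ⟨commute_lieProd_mul_ιProd (odd_two_mul_add_one l) hspan hQ, ?_⟩
  rw [lieProd_mul_ιProd_sq hQ, neg_one_pow_choose_two_two_mul_add_one]

/-- for a quadratic space with a basis `u₁,v₁,…,u_m,v_m,w₁,…,w_{2l+1}`
of the indicated kind, the element
`z = [ι u₁, ι v₁] ⋯ [ι u_m, ι v_m] · ι w₁ ⋯ ι w_{2l+1}` of the Clifford algebra is
central and satisfies `z² = (-1)ˡ`. -/
theorem stmt_11 {F U : Type*} [Field F] [CharZero F] [AddCommGroup U] [Module F U]
    (m l : ℕ) (u v : Fin m → U) (w : Fin (2 * l + 1) → U)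
    (Q : QuadraticForm F U)
    (b : Module.Basis (Fin m ⊕ Fin m ⊕ Fin (2 * l + 1)) F U)
    (hb : ∀ p, b p = Sum.elim u (Sum.elim v w) p)
    (hQu : ∀ i, Q (u i) = 0) (hQv : ∀ i, Q (v i) = 0)
    (hpuv : ∀ i, polar (⇑Q) (u i) (v i) = 1)
    (hQw : ∀ j, Q (w j) = 1)
    (huu : ∀ i i', i ≠ i' → polar (⇑Q) (u i) (u i') = 0)
    (hvv : ∀ i i', i ≠ i' → polar (⇑Q) (v i) (v i') = 0)
    (huv : ∀ i i', i ≠ i' → polar (⇑Q) (u i) (v i') = 0)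
    (huw : ∀ i j, polar (⇑Q) (u i) (w j) = 0)
    (hvw : ∀ i j, polar (⇑Q) (v i) (w j) = 0)
    (hww : ∀ j j', j ≠ j' → polar (⇑Q) (w j) (w j') = 0)
    (z : CliffordAlgebra Q)
    (hz : z = (List.ofFn fun i : Fin m =>
        ι Q (u i) * ι Q (v i) - ι Q (v i) * ι Q (u i)).prod *
      (List.ofFn fun j : Fin (2 * l + 1) => ι Q (w j)).prod) :
    (∀ x : CliffordAlgebra Q, z * x = x * z) ∧
    z ^ 2 = (-1 : CliffordAlgebra Q) ^ l := by
  obtain ⟨hcomm, hsq⟩ := stmt_11_general (funext hb ▸ b.span_eq) ⟨huu, hvv, huv, huw, hvw, hww⟩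
  exact hz ▸ ⟨hcomm, hsq.trans (by simp [hQu, hQv, hpuv, hQw])⟩
end

section
/- Let F be an algebraically closed field of characteristic 0, 𝒬 = Mat₂(F) with standard involution x̄ = tr(x)·I − x and norm polar form N(x,u) = det(x+u) − det(x) − det(u), and q₂ = [[0,1],[1,0]]. Regard 𝒬 ⊗_F 𝒬 as a right 𝒬-module via (x⊗y)·q = x⊗(yq), let Φ : 𝒬 ⊗_F 𝒬 ⊗_F 𝒬 → End_𝒬(𝒬 ⊗_F 𝒬) be the F-linear map determined by Φ(a⊗b⊗c)(x⊗y) = (a x b̄)⊗(c y), let σ : 𝒬 ⊗_F 𝒬 ⊗_F 𝒬 → 𝒬 ⊗_F 𝒬 ⊗_F 𝒬 be the F-linear map determined by σ(a⊗b⊗c) = ā ⊗ b̄ ⊗ (q₂⁻¹ c̄ q₂), and let h : (𝒬 ⊗_F 𝒬) × (𝒬 ⊗_F 𝒬) → 𝒬 be the F-bilinear map determined by h(x⊗y, u⊗v) = ȳ q₂ v · N(x,u). Then for every r ∈ 𝒬 ⊗_F 𝒬 ⊗_F 𝒬 and all z, w ∈ 𝒬 ⊗_F 𝒬: h(Φ(r)(z),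 w) = h(z, Φ(σ(r))(w)). -/
open scoped TensorProduct

set_option maxHeartbeats 800000
set_option synthInstance.maxHeartbeats 200000

/-- The split quaternion algebra `𝒬 = Mat₂(F)`. -/
abbrev Q2 (F : Type*) [Field F] : Type _ := Matrix (Fin 2) (Fin 2) F

/-- The standard involution `x ↦ tr(x)·1 - x` of `𝒬 = Mat₂(F)`. -/
noncomputable def quatConj (F : Type*) [Field F] (x : Q2 F) : Q2 F :=
  Matrix.trace x • (1 : Q2 F) - x

noncomputable def q2 (F : Type*) [Field F] : Q2 F := !![0, 1; 1, 0]

/-!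
The standard involution of `Mat₂` is the adjugate, so its norm polar form is
`N(x, u) = tr(x ū)`. Since the adjugate reverses products and is an involution on `2 × 2`
matrices, cyclicity of the trace gives `N(a x b̄, u) = tr(x b̄ ū a) = N(x, ā u b)`. On the other
tensor factor, `(c y)‾ q v = ȳ c̄ q v = ȳ q (q⁻¹ c̄ q v)`. Both sides of the claim are linear in
`r`, `z` and `w`, so pure tensors suffice.
-/

section AdjointPair

variable {R M N L M' N' V V' W : Type*} [CommSemiring R]
  [AddCommMonoid M] [AddCommMonoid N] [AddCommMonoid L] [AddCommMonoid M'] [AddCommMonoid N']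
  [AddCommMonoid V] [AddCommMonoid V'] [AddCommMonoid W]
  [Module R M] [Module R N] [Module R L] [Module R M'] [Module R N']
  [Module R V] [Module R V'] [Module R W]

theorem isAdjointPair_of_forall_tmul
    {B : M ⊗[R] N →ₗ[R] M ⊗[R] N →ₗ[R] W} {B' : M' ⊗[R] N' →ₗ[R] M' ⊗[R] N' →ₗ[R] W}
    {f : M ⊗[R] N →ₗ[R] M' ⊗[R] N'} {g : M' ⊗[R] N' →ₗ[R] M ⊗[R] N}
    (hfg : ∀ x y u v, B' (f (x ⊗ₜ y)) (u ⊗ₜ v) = B (x ⊗ₜ y) (g (u ⊗ₜ v))) :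
    LinearMap.IsAdjointPair B B' f g := by
  rw [LinearMap.isAdjointPair_iff_comp_eq_compl₂]
  ext x y u v
  exact hfg x y u v

theorem isAdjointPair_apply_of_forall_tmul_tmul
    {B : V →ₗ[R] V →ₗ[R] W} {B' : V' →ₗ[R] V' →ₗ[R] W}
    {Φ : (M ⊗[R] N) ⊗[R] L →ₗ[R] V →ₗ[R] V'} {Ψ : (M ⊗[R] N) ⊗[R] L →ₗ[R] V' →ₗ[R] V}
    (hΦΨ : ∀ a b c, LinearMap.IsAdjointPair B B' (Φ (a ⊗ₜ b ⊗ₜ c)) (Ψ (a ⊗ₜ b ⊗ₜ c)))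
    (r : (M ⊗[R] N) ⊗[R] L) : LinearMap.IsAdjointPair B B' (Φ r) (Ψ r) := by
  intro z w
  have maps_eq : B'.flip w ∘ₗ LinearMap.applyₗ z ∘ₗ Φ = B z ∘ₗ LinearMap.applyₗ w ∘ₗ Ψ :=
    TensorProduct.ext_threefold fun a b c ↦ hΦΨ a b c z w
  exact LinearMap.congr_fun maps_eq r

end AdjointPair

section AdjugateForm

open Matrix QuadraticMap

variable {R : Type*} [CommRing R]

theorem adjugate_mul_mul_mul_eq_conj_inv {n : Type*} [Fintype n] [DecidableEq n]
    {q : Matrix n n R} (hq : IsUnit q.det) (c y v : Matrix n n R) :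
    adjugate (c * y) * q * v = adjugate y * q * (q⁻¹ * adjugate c * q * v) := by
  simp only [adjugate_mul_distrib, Matrix.mul_assoc, mul_nonsing_inv_cancel_left _ _ hq]

theorem polar_det_fin_two_eq_trace_mul_adjugate (x u : Matrix (Fin 2) (Fin 2) R) :
    polar det x u = trace (x * adjugate u) := by
  simp only [polar, det_fin_two, adjugate_fin_two, trace_fin_two, mul_apply, Fin.sum_univ_two,
    Matrix.add_apply, of_apply, cons_val', cons_val_zero, cons_val_one]
  ring

theorem adjugate_adjugate_fin_two (x : Matrix (Fin 2) (Fin 2) R) :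
    adjugate (adjugate x) = x := by
  simp [adjugate_adjugate']

theorem polar_det_fin_two_mul_mul_left (a b x u : Matrix (Fin 2) (Fin 2) R) :
    polar det (a * x * b) u = polar det x (adjugate a * u * adjugate b) := by
  calc
    polar det (a * x * b) u = trace (a * (x * (b * adjugate u))) := by
      simp only [polar_det_fin_two_eq_trace_mul_adjugate, Matrix.mul_assoc]
    _ = trace (x * (b * adjugate u) * a) := trace_mul_comm _ _
    _ = polar det x (adjugate a * u * adjugate b) := by
      simp only [polar_det_fin_two_eq_trace_mul_adjugate, adjugate_mul_distrib,
        adjugate_adjugate_fin_two, Matrix.mul_assoc]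

local notation "𝒬" => Matrix (Fin 2) (Fin 2) R

theorem stmt_17_general {q : 𝒬} (hq : IsUnit q.det)
    (Φ : ((𝒬 ⊗[R] 𝒬) ⊗[R] 𝒬) →ₗ[R] Module.End R (𝒬 ⊗[R] 𝒬))
    (hΦ : ∀ a b c x y : 𝒬,
      Φ ((a ⊗ₜ[R] b) ⊗ₜ[R] c) (x ⊗ₜ[R] y) = (a * x * adjugate b) ⊗ₜ[R] (c * y))
    (σ : ((𝒬 ⊗[R] 𝒬) ⊗[R] 𝒬) →ₗ[R] ((𝒬 ⊗[R] 𝒬) ⊗[R] 𝒬))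
    (hσ : ∀ a b c : 𝒬, σ ((a ⊗ₜ[R] b) ⊗ₜ[R] c) =
      (adjugate a ⊗ₜ[R] adjugate b) ⊗ₜ[R] (q⁻¹ * adjugate c * q))
    (h : (𝒬 ⊗[R] 𝒬) →ₗ[R] (𝒬 ⊗[R] 𝒬) →ₗ[R] 𝒬)
    (hh : ∀ x y u v : 𝒬,
      h (x ⊗ₜ[R] y) (u ⊗ₜ[R] v) = polar det x u • (adjugate y * q * v)) :
    ∀ (r : (𝒬 ⊗[R] 𝒬) ⊗[R] 𝒬) (z w : 𝒬 ⊗[R] 𝒬), h (Φ r z) w = h z (Φ (σ r) w) := by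
  suffices ∀ a b c : 𝒬, LinearMap.IsAdjointPair h h
      (Φ (a ⊗ₜ b ⊗ₜ c)) ((Φ ∘ₗ σ) (a ⊗ₜ b ⊗ₜ c)) from
    isAdjointPair_apply_of_forall_tmul_tmul this
  refine fun a b c ↦ isAdjointPair_of_forall_tmul fun x y u v ↦ ?_
  rw [LinearMap.comp_apply, hσ, hΦ, hΦ, hh, hh, polar_det_fin_two_mul_mul_left,
    adjugate_mul_mul_mul_eq_conj_inv hq]

end AdjugateForm

theorem quatConj_eq_adjugate (F : Type*) [Field F] : quatConj F = Matrix.adjugate := by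
  ext x i j
  fin_cases i <;> fin_cases j <;>
    simp [quatConj, Matrix.trace_fin_two, Matrix.adjugate_fin_two]

theorem isUnit_det_q2 (F : Type*) [Field F] : IsUnit (q2 F).det := by
  simp [q2, Matrix.det_fin_two]

/-- the bar involution corresponds to the adjoint with respect to the
skew-hermitian form `h`: for `Φ(a⊗b⊗c)(x⊗y) = (a x b̄) ⊗ (c y)` and
`σ(a⊗b⊗c) = ā ⊗ b̄ ⊗ (q₂⁻¹ c̄ q₂)` one has `h(Φ(r)z, w) = h(z, Φ(σ(r))w)`. -/
theorem stmt_17 {F : Type*} [Field F] [IsAlgClosed F] [CharZero F]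
    (Φ : ((Q2 F ⊗[F] Q2 F) ⊗[F] Q2 F) →ₗ[F] Module.End F (Q2 F ⊗[F] Q2 F))
    (hΦ : ∀ a b c x y : Q2 F,
      Φ ((a ⊗ₜ[F] b) ⊗ₜ[F] c) (x ⊗ₜ[F] y) = (a * x * quatConj F b) ⊗ₜ[F] (c * y))
    (σ : ((Q2 F ⊗[F] Q2 F) ⊗[F] Q2 F) →ₗ[F] ((Q2 F ⊗[F] Q2 F) ⊗[F] Q2 F))
    (hσ : ∀ a b c : Q2 F, σ ((a ⊗ₜ[F] b) ⊗ₜ[F] c) =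
      (quatConj F a ⊗ₜ[F] quatConj F b) ⊗ₜ[F] ((q2 F)⁻¹ * quatConj F c * q2 F))
    (h : (Q2 F ⊗[F] Q2 F) →ₗ[F] (Q2 F ⊗[F] Q2 F) →ₗ[F] Q2 F)
    (hh : ∀ x y u v : Q2 F, h (x ⊗ₜ[F] y) (u ⊗ₜ[F] v) =
      (Matrix.det (x + u) - Matrix.det x - Matrix.det u) •
        (quatConj F y * q2 F * v)) :
    ∀ (r : (Q2 F ⊗[F] Q2 F) ⊗[F] Q2 F) (z w : Q2 F ⊗[F] Q2 F),
      h (Φ r z) w = h z (Φ (σ r) w) := by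
  simp only [quatConj_eq_adjugate] at hΦ hσ hh
  exact stmt_17_general (isUnit_det_q2 F) Φ hΦ σ hσ h hh
end
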